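/- arXiv:1902.05051 — 5 statements merged into one kernel-verified Lean document; each statement's English description precedes it below -/
import Mathlib

section
/- (Hardy–Sobolev type inequality) For every real p > 1 there exists a constant C > 0 such that for every function h ∈ H¹_loc(−1,1) with ‖h‖_{H₀} < ∞ one has (∫_{−1}^{1} h(y)² ρ(y)/(1−y²) dy)^{1/2} + (∫_{−1}^{1} |h(y)|^{p+1} ρ(y) dy)^{1/(p+1)} + sup_{|y|<1} |h(y)| (1−y²)^{1/(p−1)} ≤ C ‖h‖_{H₀}. -/
/-!
Write `w = 1 - y²`, `a = 2 / (p - 1) > 0`, so that `ρ = w ^ a`, and let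
`F = (h² + h'² w) ρ` and `H = h² ρ / w`.

*Hardy term.* The function `g = y h² ρ` has derivative
`h² ρ + 2 y h h' ρ - 2 a y² h² ρ / w`, and since `y² = 1 - w`, Young's inequality for the middle
term gives `g' ≤ (1 + 2 a + 1 / a) F - a H`. On a symmetric interval `[-r, r]` the boundary term
`g r - g (-r)` is nonnegative, so `a ∫ H ≤ (1 + 2 a + 1 / a) ∫ F`; let `r → 1`.

*Supremum.* The function `u = h² ρ` satisfies `|u'| ≤ F + (1 + 2 a) H`, so its oscillation is bounded
by the integrals of `F` and `H`. Averaging `u x ≤ u z + osc u` over `z ∈ (-1/2, 1/2)` bounds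
`u x = (|h x| w ^ (1 / (p - 1)))²`.

*`L^(p+1)` term.* Since `ρ ^ ((p - 1) / 2) = w`, one has `|h| ^ (p + 1) ρ = H u ^ ((p - 1) / 2)`, and
the two previous bounds combine.

The fundamental theorem of calculus enters only through its one-sided version, which bounds
`g b - g a` by the integral of an integrable majorant of `g'`; no integrability of `g'` itself is
needed.
-/

open MeasureTheory

noncomputable def rho (p y : ℝ) : ℝ := (1 - y ^ 2) ^ ((2 : ℝ) / (p - 1))

/-! ### The weight and the two densities -/

lemma one_sub_sq_pos {y : ℝ} (hy : y ∈ Set.Ioo (-1 : ℝ) 1) : 0 < 1 - y ^ 2 := by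
  nlinarith [hy.1, hy.2]

lemma rho_pos {p y : ℝ} (hy : y ∈ Set.Ioo (-1 : ℝ) 1) : 0 < rho p y :=
  Real.rpow_pos_of_pos (one_sub_sq_pos hy) _

lemma hasDerivAt_rho {p y : ℝ} (hy : y ∈ Set.Ioo (-1 : ℝ) 1) :
    HasDerivAt (rho p) (-(2 * (2 / (p - 1)) * y * (rho p y / (1 - y ^ 2)))) y := by
  have hw := one_sub_sq_pos hy
  have h1 : HasDerivAt (fun y : ℝ => 1 - y ^ 2) (-(2 * y)) y := by
    simpa using ((hasDerivAt_id y).pow 2).const_sub 1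
  have h2 := h1.rpow_const (p := (2 : ℝ) / (p - 1)) (Or.inl hw.ne')
  rw [Real.rpow_sub_one hw.ne'] at h2
  refine h2.congr_deriv ?_
  unfold rho
  ring

/-- The energy density `(h² + h'² (1 - y²)) ρ`, whose integral is `‖h‖_{H₀}²`. -/
noncomputable def energyDensity (p : ℝ) (h : ℝ → ℝ) (y : ℝ) : ℝ :=
  (h y ^ 2 + (deriv h y) ^ 2 * (1 - y ^ 2)) * rho p y

/-- The Hardy density `h² ρ / (1 - y²)`. -/
noncomputable def hardyDensity (p : ℝ) (h : ℝ → ℝ) (y : ℝ) : ℝ :=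
  h y ^ 2 * rho p y / (1 - y ^ 2)

section

variable {p : ℝ} {h : ℝ → ℝ}

lemma energyDensity_nonneg {y : ℝ} (hy : y ∈ Set.Ioo (-1 : ℝ) 1) : 0 ≤ energyDensity p h y := by
  have := one_sub_sq_pos hy
  have := rho_pos (p := p) hy
  unfold energyDensity
  positivity

lemma hardyDensity_nonneg {y : ℝ} (hy : y ∈ Set.Ioo (-1 : ℝ) 1) : 0 ≤ hardyDensity p h y := by
  have := one_sub_sq_pos hy
  have := rho_pos (p := p) hy
  unfold hardyDensity
  positivity

lemma hasDerivAt_sq_mul_rho {y : ℝ} (hy : y ∈ Set.Ioo (-1 : ℝ) 1) (hd : DifferentiableAt ℝ h y) :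
    HasDerivAt (fun y => h y ^ 2 * rho p y)
      (2 * h y * deriv h y * rho p y - 2 * (2 / (p - 1)) * y * hardyDensity p h y) y := by
  refine ((hd.hasDerivAt.pow 2).mul (hasDerivAt_rho (p := p) hy)).congr_deriv ?_
  simp only [hardyDensity, Pi.pow_apply]
  push_cast
  ring

lemma continuousOn_rho : ContinuousOn (rho p) (Set.Ioo (-1 : ℝ) 1) := fun _ hy =>
  (hasDerivAt_rho hy).continuousAt.continuousWithinAt

lemma continuousOn_of_differentiableAt (hd : ∀ y ∈ Set.Ioo (-1 : ℝ) 1, DifferentiableAt ℝ h y) :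
    ContinuousOn h (Set.Ioo (-1 : ℝ) 1) := fun y hy => (hd y hy).continuousAt.continuousWithinAt

lemma continuousOn_hardyDensity (hd : ∀ y ∈ Set.Ioo (-1 : ℝ) 1, DifferentiableAt ℝ h y) :
    ContinuousOn (hardyDensity p h) (Set.Ioo (-1 : ℝ) 1) :=
  (((continuousOn_of_differentiableAt hd).pow 2).mul continuousOn_rho).div (by fun_prop)
    fun _ hy => (one_sub_sq_pos hy).ne'

lemma aestronglyMeasurable_energyDensity
    (hd : ∀ y ∈ Set.Ioo (-1 : ℝ) 1, DifferentiableAt ℝ h y) :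
    AEStronglyMeasurable (energyDensity p h) (volume.restrict (Set.Ioo (-1 : ℝ) 1)) := by
  have h1 := (continuousOn_of_differentiableAt hd).aestronglyMeasurable (μ := volume)
    measurableSet_Ioo
  have h2 := (continuousOn_rho (p := p)).aestronglyMeasurable (μ := volume) measurableSet_Ioo
  have h3 : AEStronglyMeasurable (fun y => (deriv h y) ^ 2 * (1 - y ^ 2))
      (volume.restrict (Set.Ioo (-1 : ℝ) 1)) :=
    (((measurable_deriv h).pow_const 2).mul (by fun_prop)).aestronglyMeasurable
  exact ((h1.pow 2).add h3).mul h2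

lemma integrableOn_energyDensity (hd : ∀ y ∈ Set.Ioo (-1 : ℝ) 1, DifferentiableAt ℝ h y)
    (hN : ∫⁻ y in Set.Ioo (-1 : ℝ) 1, ENNReal.ofReal (energyDensity p h y) < ⊤) :
    IntegrableOn (energyDensity p h) (Set.Ioo (-1 : ℝ) 1) := by
  refine ⟨aestronglyMeasurable_energyDensity hd, ?_⟩
  rw [hasFiniteIntegral_iff_ofReal]
  · exact hN
  · exact (ae_restrict_mem measurableSet_Ioo).mono fun y hy => energyDensity_nonneg hy

/-! ### Pointwise derivative bounds -/

/-- Pointwise bound on the derivative of `y h² ρ`: Young's inequality, with the coefficient chosen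
so that a multiple `-2 / (p - 1)` of the Hardy density survives. -/
lemma deriv_id_mul_le (hp : 1 < p) {y : ℝ} (hy : y ∈ Set.Ioo (-1 : ℝ) 1) :
    h y ^ 2 * rho p y + y * (2 * h y * deriv h y * rho p y
        - 2 * (2 / (p - 1)) * y * hardyDensity p h y)
      ≤ (1 + 2 * (2 / (p - 1)) + 1 / (2 / (p - 1))) * energyDensity p h y
        - 2 / (p - 1) * hardyDensity p h y := by
  have hw := one_sub_sq_pos hy
  have ha : 0 < 2 / (p - 1) := div_pos two_pos (by linarith)
  generalize 2 / (p - 1) = a at *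
  obtain ⟨D, hD, hr⟩ : ∃ D, 0 < D ∧ rho p y = D * (1 - y ^ 2) :=
    ⟨rho p y / (1 - y ^ 2), div_pos (rho_pos hy) hw, by field_simp⟩
  have hH : hardyDensity p h y = h y ^ 2 * D := by
    unfold hardyDensity; rw [hr]; field_simp
  rw [hH]
  unfold energyDensity
  rw [hr]
  generalize h y = u
  generalize deriv h y = v
  have hsq : y ^ 2 ≤ 1 := by linarith
  rw [← sub_nonneg]
  have key : 0 ≤ D * ((a * u - y * v * (1 - y ^ 2)) ^ 2 / a
      + (1 + 2 * a) * v ^ 2 * (1 - y ^ 2) ^ 2 + u ^ 2 * (1 - y ^ 2) / a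
      + v ^ 2 * (1 - y ^ 2) ^ 3 / a) := by positivity
  convert key using 1
  field_simp
  ring

/-- Pointwise bound on the derivative of `h² ρ`. -/
lemma abs_deriv_sq_mul_rho_le (hp : 1 < p) {y : ℝ} (hy : y ∈ Set.Ioo (-1 : ℝ) 1) :
    |2 * h y * deriv h y * rho p y - 2 * (2 / (p - 1)) * y * hardyDensity p h y|
      ≤ energyDensity p h y + (1 + 2 * (2 / (p - 1))) * hardyDensity p h y := by
  have hw := one_sub_sq_pos hy
  have ha : 0 < 2 / (p - 1) := div_pos two_pos (by linarith)
  generalize 2 / (p - 1) = a at *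
  obtain ⟨D, hD, hr⟩ : ∃ D, 0 < D ∧ rho p y = D * (1 - y ^ 2) :=
    ⟨rho p y / (1 - y ^ 2), div_pos (rho_pos hy) hw, by field_simp⟩
  have hH : hardyDensity p h y = h y ^ 2 * D := by
    unfold hardyDensity; rw [hr]; field_simp
  rw [hH]
  unfold energyDensity
  rw [hr]
  generalize h y = u
  generalize deriv h y = v
  have h1 : 0 < 1 - y := by linarith [hy.2]
  have h2 : 0 < 1 + y := by linarith [hy.1]
  rw [abs_le]
  constructor <;> rw [← sub_nonneg]
  · have key : 0 ≤ D * ((u + v * (1 - y ^ 2)) ^ 2 + u ^ 2 * (1 - y ^ 2)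
        + 2 * a * (1 - y) * u ^ 2) := by positivity
    refine key.trans_eq ?_
    ring
  · have key : 0 ≤ D * ((u - v * (1 - y ^ 2)) ^ 2 + u ^ 2 * (1 - y ^ 2)
        + 2 * a * (1 + y) * u ^ 2) := by positivity
    refine key.trans_eq ?_
    ring

/-! ### The Hardy inequality -/

/-- The Hardy inequality on a symmetric compact subinterval: the boundary term
`r (h r² ρ r + h (-r)² ρ (-r))` is nonnegative and can be dropped. -/
lemma intervalIntegral_hardyDensity_le (hp : 1 < p)
    (hd : ∀ y ∈ Set.Ioo (-1 : ℝ) 1, DifferentiableAt ℝ h y)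
    (hF : IntegrableOn (energyDensity p h) (Set.Ioo (-1 : ℝ) 1)) {r : ℝ} (hr0 : 0 ≤ r)
    (hr1 : r < 1) :
    2 / (p - 1) * ∫ y in (-r)..r, hardyDensity p h y
      ≤ (1 + 2 * (2 / (p - 1)) + 1 / (2 / (p - 1))) *
        ∫ y in Set.Ioo (-1 : ℝ) 1, energyDensity p h y := by
  have hsub : Set.Icc (-r) r ⊆ Set.Ioo (-1 : ℝ) 1 := fun y hy =>
    ⟨by linarith [hy.1], by linarith [hy.2]⟩
  have hle : -r ≤ r := by linarith
  have ha : 0 < 2 / (p - 1) := div_pos two_pos (by linarith)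
  have hFi : IntegrableOn (energyDensity p h) (Set.Icc (-r) r) := hF.mono_set hsub
  have hHi : IntegrableOn (hardyDensity p h) (Set.Icc (-r) r) :=
    ((continuousOn_hardyDensity hd).mono hsub).integrableOn_Icc
  have hder : ∀ y ∈ Set.Ioo (-1 : ℝ) 1, HasDerivAt (fun y => y * (h y ^ 2 * rho p y))
      (h y ^ 2 * rho p y + y * (2 * h y * deriv h y * rho p y
        - 2 * (2 / (p - 1)) * y * hardyDensity p h y)) y := fun y hy => by
    refine ((hasDerivAt_id' y).fun_mul (hasDerivAt_sq_mul_rho (p := p) hy (hd y hy))).congr_deriv ?_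
    rw [one_mul]
  have key := intervalIntegral.sub_le_integral_of_hasDeriv_right_of_le hle
    (fun y hy => (hder y (hsub hy)).continuousAt.continuousWithinAt)
    (fun y hy => (hder y (hsub (Set.Ioo_subset_Icc_self hy))).hasDerivWithinAt)
    ((hFi.const_mul (1 + 2 * (2 / (p - 1)) + 1 / (2 / (p - 1)))).sub
      (hHi.const_mul (2 / (p - 1))))
    (fun y hy => deriv_id_mul_le hp (hsub (Set.Ioo_subset_Icc_self hy)))
  have hb1 : 0 ≤ h r ^ 2 * rho p r :=
    mul_nonneg (sq_nonneg _) (rho_pos (hsub ⟨hle, le_rfl⟩)).le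
  have hb2 : 0 ≤ h (-r) ^ 2 * rho p (-r) :=
    mul_nonneg (sq_nonneg _) (rho_pos (hsub ⟨le_rfl, hle⟩)).le
  have hFii := (intervalIntegrable_iff_integrableOn_Icc_of_le hle).2 hFi
  have hHii := (intervalIntegrable_iff_integrableOn_Icc_of_le hle).2 hHi
  have hsplit : (∫ y in (-r)..r, ((1 + 2 * (2 / (p - 1)) + 1 / (2 / (p - 1))) *
      energyDensity p h y - 2 / (p - 1) * hardyDensity p h y))
      = (1 + 2 * (2 / (p - 1)) + 1 / (2 / (p - 1))) * (∫ y in (-r)..r, energyDensity p h y)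
        - 2 / (p - 1) * ∫ y in (-r)..r, hardyDensity p h y := by
    rw [intervalIntegral.integral_sub (hFii.const_mul _) (hHii.const_mul _),
      intervalIntegral.integral_const_mul, intervalIntegral.integral_const_mul]
  have hmono : (∫ y in (-r)..r, energyDensity p h y)
      ≤ ∫ y in Set.Ioo (-1 : ℝ) 1, energyDensity p h y := by
    rw [intervalIntegral.integral_of_le hle]
    exact setIntegral_mono_set hF
      ((ae_restrict_mem measurableSet_Ioo).mono fun y hy => energyDensity_nonneg hy)
      (Set.Ioc_subset_Icc_self.trans hsub).eventuallyLE
  have hK : 0 ≤ 1 + 2 * (2 / (p - 1)) + 1 / (2 / (p - 1)) := by positivity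
  have := mul_le_mul_of_nonneg_left hmono hK
  have e := key.trans_eq hsplit
  nlinarith [mul_nonneg hr0 hb1, mul_nonneg hr0 hb2]

/-- The Hardy inequality on `(-1, 1)`, including finiteness of the left-hand side. -/
lemma hardy_inequality (hp : 1 < p)
    (hd : ∀ y ∈ Set.Ioo (-1 : ℝ) 1, DifferentiableAt ℝ h y)
    (hF : IntegrableOn (energyDensity p h) (Set.Ioo (-1 : ℝ) 1)) :
    IntegrableOn (hardyDensity p h) (Set.Ioo (-1 : ℝ) 1) ∧
    ∫ y in Set.Ioo (-1 : ℝ) 1, hardyDensity p h y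
      ≤ (1 + 2 * (2 / (p - 1)) + 1 / (2 / (p - 1))) / (2 / (p - 1)) *
        ∫ y in Set.Ioo (-1 : ℝ) 1, energyDensity p h y := by
  have ha : 0 < 2 / (p - 1) := div_pos two_pos (by linarith)
  set N := ∫ y in Set.Ioo (-1 : ℝ) 1, energyDensity p h y
  set K := 1 + 2 * (2 / (p - 1)) + 1 / (2 / (p - 1)) with hK
  let r : ℕ → ℝ := fun n => 1 - 1 / ((n : ℝ) + 1)
  have hr0 : ∀ n, 0 ≤ r n := fun n => by
    have : 1 / ((n : ℝ) + 1) ≤ 1 := by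
      rw [div_le_one (by positivity)]; linarith [n.cast_nonneg (α := ℝ)]
    simp only [r]; linarith
  have hr1 : ∀ n, r n < 1 := fun n => by
    have : 0 < 1 / ((n : ℝ) + 1) := by positivity
    simp only [r]; linarith
  have hrt : Filter.Tendsto r Filter.atTop (nhds 1) := by
    simpa [r] using (tendsto_const_nhds (x := (1 : ℝ))).sub
      (tendsto_one_div_add_atTop_nhds_zero_nat (𝕜 := ℝ))
  have hcov : AECover (volume.restrict (Set.Ioo (-1 : ℝ) 1)) Filter.atTop
      fun n => Set.Ioc (-r n) (r n) := aecover_Ioo_of_Ioc hrt.neg hrt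
  have hsub : ∀ n, Set.Icc (-r n) (r n) ⊆ Set.Ioo (-1 : ℝ) 1 := fun n y hy =>
    ⟨by linarith [hy.1, hr1 n], by linarith [hy.2, hr1 n]⟩
  have hres : ∀ n, (volume.restrict (Set.Ioo (-1 : ℝ) 1)).restrict (Set.Ioc (-r n) (r n))
      = volume.restrict (Set.Ioc (-r n) (r n)) := fun n => by
    rw [Measure.restrict_restrict measurableSet_Ioc,
      Set.inter_eq_left.2 (Set.Ioc_subset_Icc_self.trans (hsub n))]
  have hnn : 0 ≤ᵐ[volume.restrict (Set.Ioo (-1 : ℝ) 1)] hardyDensity p h :=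
    (ae_restrict_mem measurableSet_Ioo).mono fun y hy => hardyDensity_nonneg hy
  have hbd : ∀ n, ∫ y in Set.Ioc (-r n) (r n), hardyDensity p h y
      ∂(volume.restrict (Set.Ioo (-1 : ℝ) 1)) ≤ K / (2 / (p - 1)) * N := fun n => by
    rw [hres, ← intervalIntegral.integral_of_le (by linarith [hr0 n]), div_mul_eq_mul_div,
      le_div_iff₀ ha, mul_comm]
    exact intervalIntegral_hardyDensity_le hp hd hF (hr0 n) (hr1 n)
  have hint : IntegrableOn (hardyDensity p h) (Set.Ioo (-1 : ℝ) 1) :=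
    hcov.integrable_of_integral_bounded_of_nonneg_ae _ (fun n => by
      rw [IntegrableOn, hres]
      exact (((continuousOn_hardyDensity hd).mono (hsub n)).integrableOn_Icc).mono_set
        Set.Ioc_subset_Icc_self) hnn (Filter.Eventually.of_forall hbd)
  exact ⟨hint, le_of_tendsto (hcov.integral_tendsto_of_countably_generated hint)
    (Filter.Eventually.of_forall hbd)⟩

/-! ### The supremum bound -/

/-- The oscillation of `h² ρ` is controlled by the two integrals. -/
lemma sq_mul_rho_le_add (hp : 1 < p)
    (hd : ∀ y ∈ Set.Ioo (-1 : ℝ) 1, DifferentiableAt ℝ h y)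
    (hF : IntegrableOn (energyDensity p h) (Set.Ioo (-1 : ℝ) 1))
    (hH : IntegrableOn (hardyDensity p h) (Set.Ioo (-1 : ℝ) 1))
    {x z : ℝ} (hx : x ∈ Set.Ioo (-1 : ℝ) 1) (hz : z ∈ Set.Ioo (-1 : ℝ) 1) :
    h x ^ 2 * rho p x ≤ h z ^ 2 * rho p z + ((∫ y in Set.Ioo (-1 : ℝ) 1, energyDensity p h y)
      + (1 + 2 * (2 / (p - 1))) * ∫ y in Set.Ioo (-1 : ℝ) 1, hardyDensity p h y) := by
  have ha : 0 < 2 / (p - 1) := div_pos two_pos (by linarith)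
  set φ : ℝ → ℝ := fun y => energyDensity p h y + (1 + 2 * (2 / (p - 1))) * hardyDensity p h y
    with hφ
  have hφi : IntegrableOn φ (Set.Ioo (-1 : ℝ) 1) := hF.add (hH.const_mul _)
  have htot : ∫ y in Set.Ioo (-1 : ℝ) 1, φ y = (∫ y in Set.Ioo (-1 : ℝ) 1, energyDensity p h y)
      + (1 + 2 * (2 / (p - 1))) * ∫ y in Set.Ioo (-1 : ℝ) 1, hardyDensity p h y := by
    rw [hφ, integral_add hF (hH.const_mul _), integral_const_mul]
  rw [← htot]
  have hmono : ∀ s t : ℝ, s ≤ t → Set.Icc s t ⊆ Set.Ioo (-1 : ℝ) 1 →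
      ∫ y in s..t, φ y ≤ ∫ y in Set.Ioo (-1 : ℝ) 1, φ y := fun s t hst hsub => by
    rw [intervalIntegral.integral_of_le hst]
    refine setIntegral_mono_set hφi ((ae_restrict_mem measurableSet_Ioo).mono fun y hy => ?_)
      (Set.Ioc_subset_Icc_self.trans hsub).eventuallyLE
    have := energyDensity_nonneg (p := p) (h := h) hy
    have := hardyDensity_nonneg (p := p) (h := h) hy
    simp only [hφ, Pi.zero_apply]
    positivity
  have hder := fun y hy => hasDerivAt_sq_mul_rho (p := p) hy (hd y hy)
  rcases le_total z x with hzx | hxz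
  · have hsub : Set.Icc z x ⊆ Set.Ioo (-1 : ℝ) 1 := fun y hy =>
      ⟨hz.1.trans_le hy.1, hy.2.trans_lt hx.2⟩
    have key := intervalIntegral.sub_le_integral_of_hasDeriv_right_of_le hzx
      (fun y hy => (hder y (hsub hy)).continuousAt.continuousWithinAt)
      (fun y hy => (hder y (hsub (Set.Ioo_subset_Icc_self hy))).hasDerivWithinAt)
      (hφi.mono_set hsub)
      (fun y hy => (le_abs_self _).trans
        (abs_deriv_sq_mul_rho_le hp (hsub (Set.Ioo_subset_Icc_self hy))))
    linarith [hmono z x hzx hsub]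
  · have hsub : Set.Icc x z ⊆ Set.Ioo (-1 : ℝ) 1 := fun y hy =>
      ⟨hx.1.trans_le hy.1, hy.2.trans_lt hz.2⟩
    have key := intervalIntegral.sub_le_integral_of_hasDeriv_right_of_le hxz
      (fun y hy => (hder y (hsub hy)).neg.continuousAt.continuousWithinAt)
      (fun y hy => (hder y (hsub (Set.Ioo_subset_Icc_self hy))).neg.hasDerivWithinAt)
      (hφi.mono_set hsub)
      (fun y hy => (neg_le_abs _).trans
        (abs_deriv_sq_mul_rho_le hp (hsub (Set.Ioo_subset_Icc_self hy))))
    simp only [Pi.neg_apply] at key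
    linarith [hmono x z hxz hsub]

/-- Pointwise bound: the oscillation bound is averaged over `(-1/2, 1/2)`, an interval of length one
on which the integral of `h² ρ` is at most that of the energy density. -/
lemma sq_mul_rho_le (hp : 1 < p)
    (hd : ∀ y ∈ Set.Ioo (-1 : ℝ) 1, DifferentiableAt ℝ h y)
    (hF : IntegrableOn (energyDensity p h) (Set.Ioo (-1 : ℝ) 1))
    (hH : IntegrableOn (hardyDensity p h) (Set.Ioo (-1 : ℝ) 1))
    {x : ℝ} (hx : x ∈ Set.Ioo (-1 : ℝ) 1) :
    h x ^ 2 * rho p x ≤ 2 * (∫ y in Set.Ioo (-1 : ℝ) 1, energyDensity p h y)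
      + (1 + 2 * (2 / (p - 1))) * ∫ y in Set.Ioo (-1 : ℝ) 1, hardyDensity p h y := by
  set M := (∫ y in Set.Ioo (-1 : ℝ) 1, energyDensity p h y)
    + (1 + 2 * (2 / (p - 1))) * ∫ y in Set.Ioo (-1 : ℝ) 1, hardyDensity p h y with hM
  have hsub : Set.Ioo (-(1 / 2) : ℝ) (1 / 2) ⊆ Set.Ioo (-1 : ℝ) 1 :=
    Set.Ioo_subset_Ioo (by norm_num) (by norm_num)
  have hvol : volume.real (Set.Ioo (-(1 / 2) : ℝ) (1 / 2)) = 1 := by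
    rw [Real.volume_real_Ioo_of_le (by norm_num)]; norm_num
  have h1 : ∫ z in Set.Ioo (-(1 / 2) : ℝ) (1 / 2), (h x ^ 2 * rho p x - M)
      ≤ ∫ z in Set.Ioo (-(1 / 2) : ℝ) (1 / 2), energyDensity p h z := by
    refine setIntegral_mono_on (integrableOn_const (by simp)) (hF.mono_set hsub)
      measurableSet_Ioo fun z hz => ?_
    have h2 := sq_mul_rho_le_add hp hd hF hH hx (hsub hz)
    have hw := one_sub_sq_pos (hsub hz)
    have h3 := rho_pos (p := p) (hsub hz)
    have h4 : 0 ≤ (deriv h z) ^ 2 * (1 - z ^ 2) * rho p z := by positivity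
    unfold energyDensity at h2 ⊢
    unfold energyDensity at hM
    linarith
  rw [setIntegral_const, hvol, one_smul] at h1
  have h2 : ∫ z in Set.Ioo (-(1 / 2) : ℝ) (1 / 2), energyDensity p h z
      ≤ ∫ y in Set.Ioo (-1 : ℝ) 1, energyDensity p h y :=
    setIntegral_mono_set hF
      ((ae_restrict_mem measurableSet_Ioo).mono fun y hy => energyDensity_nonneg hy)
      hsub.eventuallyLE
  linarith

/-! ### The power term and the full inequality -/

/-- Since `ρ ^ ((p - 1) / 2) = 1 - y²`, the weighted power splits as `H (h² ρ) ^ ((p - 1) / 2)`. -/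
lemma abs_rpow_mul_rho (hp : 1 < p) {y : ℝ} (hy : y ∈ Set.Ioo (-1 : ℝ) 1) :
    |h y| ^ (p + 1) * rho p y = hardyDensity p h y * (h y ^ 2 * rho p y) ^ ((p - 1) / 2) := by
  have hw := one_sub_sq_pos hy
  have hp0 : p - 1 ≠ 0 := by linarith
  have h1 : rho p y ^ ((p - 1) / 2) = 1 - y ^ 2 := by
    unfold rho
    rw [← Real.rpow_mul hw.le, show 2 / (p - 1) * ((p - 1) / 2) = 1 by field_simp, Real.rpow_one]
  have h2 : (h y ^ 2) ^ ((p - 1) / 2) = |h y| ^ (p - 1) := by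
    rw [← sq_abs, ← Real.rpow_two, ← Real.rpow_mul (abs_nonneg _)]
    congr 1
    ring
  rw [Real.mul_rpow (sq_nonneg _) (rho_pos hy).le, h1, h2, show p + 1 = 2 + (p - 1) by ring,
    Real.rpow_add_of_nonneg (abs_nonneg _) (by norm_num) (by linarith), Real.rpow_two, sq_abs]
  unfold hardyDensity
  field_simp

lemma abs_mul_rpow_eq_sqrt {y : ℝ} (hy : y ∈ Set.Ioo (-1 : ℝ) 1) :
    |h y| * (1 - y ^ 2) ^ ((1 : ℝ) / (p - 1)) = √(h y ^ 2 * rho p y) := by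
  have hw := one_sub_sq_pos hy
  rw [Real.sqrt_mul (sq_nonneg _), Real.sqrt_sq_eq_abs, Real.sqrt_eq_rpow]
  unfold rho
  rw [← Real.rpow_mul hw.le]
  congr 2
  ring

end

theorem stmt1 (p : ℝ) (hp : 1 < p) :
    ∃ C : ℝ, 0 < C ∧ ∀ h : ℝ → ℝ,
      (∀ y ∈ Set.Ioo (-1 : ℝ) 1, DifferentiableAt ℝ h y) →
      (∫⁻ y in Set.Ioo (-1 : ℝ) 1,
          ENNReal.ofReal ((h y ^ 2 + (deriv h y) ^ 2 * (1 - y ^ 2)) * rho p y)) < ⊤ →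
      (∫⁻ y in Set.Ioo (-1 : ℝ) 1,
          ENNReal.ofReal (h y ^ 2 * rho p y / (1 - y ^ 2))) ^ ((1 : ℝ) / 2)
        + (∫⁻ y in Set.Ioo (-1 : ℝ) 1,
            ENNReal.ofReal (|h y| ^ (p + 1) * rho p y)) ^ ((1 : ℝ) / (p + 1))
        + (⨆ y : Set.Ioo (-1 : ℝ) 1,
            ENNReal.ofReal (|h (y : ℝ)| * (1 - (y : ℝ) ^ 2) ^ ((1 : ℝ) / (p - 1))))
      ≤ ENNReal.ofReal C *
        (∫⁻ y in Set.Ioo (-1 : ℝ) 1,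
            ENNReal.ofReal ((h y ^ 2 + (deriv h y) ^ 2 * (1 - y ^ 2)) * rho p y)) ^ ((1 : ℝ) / 2) := by
  have ha : 0 < 2 / (p - 1) := div_pos two_pos (by linarith)
  set c₁ : ℝ := (1 + 2 * (2 / (p - 1)) + 1 / (2 / (p - 1))) / (2 / (p - 1)) with hc₁
  have hc₁0 : 0 < c₁ := by positivity
  set c : ℝ := 2 + (1 + 2 * (2 / (p - 1))) * c₁ with hc
  have hc0 : 0 < c := by positivity
  refine ⟨3 * √c, by positivity, fun h hd hN => ?_⟩
  change ∫⁻ y in Set.Ioo (-1 : ℝ) 1, ENNReal.ofReal (energyDensity p h y) < ⊤ at hN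
  change (∫⁻ y in Set.Ioo (-1 : ℝ) 1, ENNReal.ofReal (hardyDensity p h y)) ^ ((1 : ℝ) / 2) + _ + _
    ≤ _ * (∫⁻ y in Set.Ioo (-1 : ℝ) 1, ENNReal.ofReal (energyDensity p h y)) ^ ((1 : ℝ) / 2)
  have hF := integrableOn_energyDensity hd hN
  obtain ⟨hH, hHle⟩ := hardy_inequality hp hd hF
  rw [← hc₁] at hHle
  have hFnn : 0 ≤ᵐ[volume.restrict (Set.Ioo (-1 : ℝ) 1)] energyDensity p h :=
    (ae_restrict_mem measurableSet_Ioo).mono fun y hy => energyDensity_nonneg hy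
  have hHnn : 0 ≤ᵐ[volume.restrict (Set.Ioo (-1 : ℝ) 1)] hardyDensity p h :=
    (ae_restrict_mem measurableSet_Ioo).mono fun y hy => hardyDensity_nonneg hy
  rw [← ofReal_integral_eq_lintegral_ofReal hF hFnn]
  have hHl := ofReal_integral_eq_lintegral_ofReal hH hHnn
  have hu : ∀ x ∈ Set.Ioo (-1 : ℝ) 1, _ := fun x hx => sq_mul_rho_le hp hd hF hH hx
  have hN0 : 0 ≤ ∫ y in Set.Ioo (-1 : ℝ) 1, energyDensity p h y := integral_nonneg_of_ae hFnn
  set N := ∫ y in Set.Ioo (-1 : ℝ) 1, energyDensity p h y with hNdef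
  set I := ∫ y in Set.Ioo (-1 : ℝ) 1, hardyDensity p h y with hIdef
  set X := c * N with hX
  have hX0 : 0 ≤ X := by positivity
  have hIX : I ≤ X := by
    have : c₁ ≤ c := by nlinarith
    exact hHle.trans (mul_le_mul_of_nonneg_right this hN0)
  have huX : ∀ x ∈ Set.Ioo (-1 : ℝ) 1, h x ^ 2 * rho p x ≤ X := fun x hx => by
    have := mul_le_mul_of_nonneg_left hHle (show 0 ≤ 1 + 2 * (2 / (p - 1)) by positivity)
    have h2 := hu x hx
    rw [hX, hc]
    linarith
  have hrhs : ENNReal.ofReal (3 * √c) * ENNReal.ofReal N ^ ((1 : ℝ) / 2)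
      = ENNReal.ofReal (√X) + ENNReal.ofReal (√X) + ENNReal.ofReal (√X) := by
    rw [ENNReal.ofReal_rpow_of_nonneg hN0 (by norm_num), ← Real.sqrt_eq_rpow,
      ← ENNReal.ofReal_mul (by positivity), ← ENNReal.ofReal_add (by positivity) (by positivity),
      ← ENNReal.ofReal_add (by positivity) (by positivity), hX, Real.sqrt_mul hc0.le]
    congr 1
    ring
  rw [hrhs]
  refine add_le_add (add_le_add ?_ ?_) ?_
  · rw [← hHl, Real.sqrt_eq_rpow, ← ENNReal.ofReal_rpow_of_nonneg hX0 (by norm_num)]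
    gcongr
  · have hle : ∫⁻ y in Set.Ioo (-1 : ℝ) 1, ENNReal.ofReal (|h y| ^ (p + 1) * rho p y)
        ≤ ENNReal.ofReal (X ^ ((p + 1) / 2)) := by
      calc _ ≤ ∫⁻ y in Set.Ioo (-1 : ℝ) 1,
            ENNReal.ofReal (hardyDensity p h y) * ENNReal.ofReal (X ^ ((p - 1) / 2)) := by
            refine setLIntegral_mono' measurableSet_Ioo fun y hy => ?_
            have hH0 := hardyDensity_nonneg (p := p) (h := h) hy
            rw [abs_rpow_mul_rho hp hy, ← ENNReal.ofReal_mul hH0]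
            refine ENNReal.ofReal_le_ofReal (mul_le_mul_of_nonneg_left ?_ hH0)
            exact Real.rpow_le_rpow (mul_nonneg (sq_nonneg _) (rho_pos hy).le) (huX y hy)
              (by linarith)
        _ = ENNReal.ofReal I * ENNReal.ofReal (X ^ ((p - 1) / 2)) := by
            rw [lintegral_mul_const' _ _ ENNReal.ofReal_ne_top, hHl]
        _ ≤ ENNReal.ofReal X * ENNReal.ofReal (X ^ ((p - 1) / 2)) := by gcongr
        _ = ENNReal.ofReal (X ^ ((p + 1) / 2)) := by
            rw [← ENNReal.ofReal_mul hX0, show (p + 1) / 2 = 1 + (p - 1) / 2 by ring,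
              Real.rpow_add_of_nonneg hX0 zero_le_one (by linarith), Real.rpow_one]
    calc _ ≤ ENNReal.ofReal (X ^ ((p + 1) / 2)) ^ ((1 : ℝ) / (p + 1)) :=
          ENNReal.rpow_le_rpow hle (by positivity)
      _ = ENNReal.ofReal (√X) := by
          have hp1 : p + 1 ≠ 0 := by linarith
          rw [ENNReal.ofReal_rpow_of_nonneg (by positivity) (by positivity),
            ← Real.rpow_mul hX0, Real.sqrt_eq_rpow]
          congr 2
          field_simp
  · refine iSup_le fun y => ENNReal.ofReal_le_ofReal ?_
    rw [abs_mul_rpow_eq_sqrt y.2]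
    exact Real.sqrt_le_sqrt (huX y y.2)
end

section
/- (Boundedness of the soliton in several norms) For every real p > 1 there exists a constant C > 0 such that for every d ∈ (−1,1): ∫_{−1}^{1} κ(d,y)² ρ(y)/(1−y²) dy ≤ C, ∫_{−1}^{1} κ(d,y)^{p+1} ρ(y) dy ≤ C, sup_{|y|<1} κ(d,y)(1−y²)^{1/(p−1)} ≤ C, and ‖κ(d,·)‖_{H₀} ≤ C. -/
/-!
Put `T = (1 - d²)(1 - y²) / (1 + d y)²`. Since `(1 + d y)² - (1 - d²)(1 - y²) = (d + y)²`, one has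
`0 < T ≤ 1` on `(-1, 1)`, and `κ(d, y) (1 - y²)^(1/(p-1)) = κ₀ T^(1/(p-1))`, which is the pointwise
bound. Each of the three integrands is at most a constant times `T^(2/(p-1)) / (1 - y²)`:

* `κ² ρ = κ₀² T^(2/(p-1))`;
* `κ^(p+1) ρ = κ₀^(p+1) T^(2/(p-1)) · T / (1 - y²)`, because `(p+1)/(p-1) = 1 + 2/(p-1)`;
* `κ' = -(2/(p-1)) d κ / (1 + d y)`, and `1 - y² ≤ 2 (1 + d y)`.

The integral of this common majorant does not depend on `d`: the Möbius map
`z = (y + d) / (1 + d y)` of `(-1, 1)` satisfies `1 - z² = T` and `dz / (1 - z²) = dy / (1 - y²)`,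
so the integral is that of `(1 - z²)^(2/(p-1) - 1)`, which is finite (`lintegral_weight_lt_top`,
`lintegral_majorant_le`).
-/

open MeasureTheory

noncomputable def kappa0 (p : ℝ) : ℝ := (2 * (p + 1) / (p - 1) ^ 2) ^ ((1 : ℝ) / (p - 1))

noncomputable def solKappa (p d y : ℝ) : ℝ :=
  kappa0 p * (1 - d ^ 2) ^ ((1 : ℝ) / (p - 1)) / (1 + d * y) ^ ((2 : ℝ) / (p - 1))

/-- The quantity `1 - z²`, where `z = (y + d) / (1 + d y)`, written in terms of `d` and `y`. -/
noncomputable def boostT (d y : ℝ) : ℝ := (1 - d ^ 2) * (1 - y ^ 2) / (1 + d * y) ^ 2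

lemma one_add_mul_pos {d y : ℝ} (hd : d ∈ Set.Ioo (-1 : ℝ) 1) (hy : y ∈ Set.Ioo (-1 : ℝ) 1) :
    0 < 1 + d * y := by
  obtain ⟨h1, h2⟩ := hd
  obtain ⟨h3, h4⟩ := hy
  nlinarith [mul_pos (sub_pos.2 h2) (sub_pos.2 h4), mul_pos (sub_pos.2 h1) (sub_pos.2 h3)]

lemma boostT_pos {d y : ℝ} (hd : d ∈ Set.Ioo (-1 : ℝ) 1) (hy : y ∈ Set.Ioo (-1 : ℝ) 1) :
    0 < boostT d y := by
  have := one_add_mul_pos hd hy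
  have := one_sub_sq_pos hd
  have := one_sub_sq_pos hy
  unfold boostT
  positivity

lemma boostT_le_one {d y : ℝ} (hd : d ∈ Set.Ioo (-1 : ℝ) 1) (hy : y ∈ Set.Ioo (-1 : ℝ) 1) :
    boostT d y ≤ 1 := by
  have := one_add_mul_pos hd hy
  unfold boostT
  rw [div_le_one (by positivity)]
  nlinarith [sq_nonneg (d + y)]

/-- For `b < 0` one of the factors `1 - z`, `1 + z` is at least `1`, so the power of the product is
controlled by the power of the other factor; for `b ≥ 0` the power is at most `1`. -/
lemma one_sub_sq_rpow_le {z : ℝ} (b : ℝ) (hz : z ∈ Set.Ioo (-1 : ℝ) 1) :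
    (1 - z ^ 2) ^ b ≤ 1 + ((1 - z) ^ b + (1 + z) ^ b) := by
  obtain ⟨h1, h2⟩ := hz
  have hv : 0 < 1 - z ^ 2 := by nlinarith
  have e1 : 0 ≤ (1 - z) ^ b := Real.rpow_nonneg (by linarith) _
  have e2 : 0 ≤ (1 + z) ^ b := Real.rpow_nonneg (by linarith) _
  rcases le_total 0 b with hb | hb
  · have := Real.rpow_le_one hv.le (by nlinarith) hb
    linarith
  · rcases le_total 0 z with h | h
    · have := Real.rpow_le_rpow_of_nonpos (show 0 < 1 - z by linarith)
        (show 1 - z ≤ 1 - z ^ 2 by nlinarith) hb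
      linarith
    · have := Real.rpow_le_rpow_of_nonpos (show 0 < 1 + z by linarith)
        (show 1 + z ≤ 1 - z ^ 2 by nlinarith) hb
      linarith

lemma lintegral_weight_lt_top {b : ℝ} (hb : -1 < b) :
    ∫⁻ z in Set.Ioo (-1 : ℝ) 1, ENNReal.ofReal ((1 - z ^ 2) ^ b) < ⊤ := by
  have i0 : IntervalIntegrable (fun x : ℝ => x ^ b) volume 0 2 :=
    intervalIntegral.intervalIntegrable_rpow' hb
  have i1 : IntervalIntegrable (fun z : ℝ => (1 + z) ^ b) volume (-1) 1 := by
    have := i0.comp_add_left 1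
    norm_num at this
    exact this
  have i2 : IntervalIntegrable (fun z : ℝ => (1 - z) ^ b) volume (-1) 1 := by
    have := i0.comp_sub_left 1
    norm_num at this
    exact this.symm
  have i3 : IntervalIntegrable (fun z : ℝ => 1 + ((1 - z) ^ b + (1 + z) ^ b)) volume (-1) 1 :=
    intervalIntegrable_const.add (i2.add i1)
  have i4 := (intervalIntegrable_iff_integrableOn_Ioo_of_le (by norm_num)).1 i3
  refine lt_of_le_of_lt (setLIntegral_mono' measurableSet_Ioo fun z hz =>
    ENNReal.ofReal_le_ofReal (one_sub_sq_rpow_le b hz)) ?_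
  exact i4.lintegral_lt_top

/-- Change of variables `z = (y + d) / (1 + d y)`: the bound on the right is independent of `d`.
(Equality holds, but only the image being contained in `(-1, 1)` is needed.) -/
lemma lintegral_majorant_le {c d : ℝ} (hd : d ∈ Set.Ioo (-1 : ℝ) 1) :
    ∫⁻ y in Set.Ioo (-1 : ℝ) 1, ENNReal.ofReal (boostT d y ^ c / (1 - y ^ 2)) ≤
      ∫⁻ z in Set.Ioo (-1 : ℝ) 1, ENNReal.ofReal ((1 - z ^ 2) ^ (c - 1)) := by
  set f : ℝ → ℝ := fun y => (y + d) / (1 + d * y) with hf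
  have hu := one_sub_sq_pos hd
  have hfT : ∀ y ∈ Set.Ioo (-1 : ℝ) 1, 1 - f y ^ 2 = boostT d y := by
    intro y hy
    have hw := one_add_mul_pos hd hy
    simp only [hf, boostT]
    rw [div_pow, eq_div_iff (by positivity), sub_mul, div_mul_cancel₀ _ (by positivity)]
    ring
  have hder : ∀ y ∈ Set.Ioo (-1 : ℝ) 1,
      HasDerivWithinAt f ((1 - d ^ 2) / (1 + d * y) ^ 2) (Set.Ioo (-1 : ℝ) 1) y := by
    intro y hy
    have hw := one_add_mul_pos hd hy
    have h1 : HasDerivAt (fun y : ℝ => y + d) 1 y := (hasDerivAt_id y).add_const d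
    have h2 : HasDerivAt (fun y : ℝ => 1 + d * y) d y := by
      simpa using ((hasDerivAt_id y).const_mul d).const_add 1
    have h3 := h1.div h2 hw.ne'
    refine (h3.congr_deriv ?_).hasDerivWithinAt
    ring
  have hinj : Set.InjOn f (Set.Ioo (-1 : ℝ) 1) := by
    intro x hx y hy hxy
    have hwx := one_add_mul_pos hd hx
    have hwy := one_add_mul_pos hd hy
    simp only [hf] at hxy
    rw [div_eq_div_iff hwx.ne' hwy.ne'] at hxy
    have : (1 - d ^ 2) * (x - y) = 0 := by linear_combination hxy
    rcases mul_eq_zero.1 this with h | h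
    · exact absurd h hu.ne'
    · linarith
  have hsub : f '' Set.Ioo (-1 : ℝ) 1 ⊆ Set.Ioo (-1 : ℝ) 1 := by
    rintro _ ⟨y, hy, rfl⟩
    have h := hfT y hy
    have hT := boostT_pos hd hy
    exact abs_lt.1 ((sq_lt_one_iff_abs_lt_one _).1 (by linarith))
  have key := lintegral_image_eq_lintegral_abs_deriv_mul measurableSet_Ioo hder hinj
    (fun z => ENNReal.ofReal ((1 - z ^ 2) ^ (c - 1)))
  refine le_trans (le_of_eq ?_) (lintegral_mono_set hsub)
  rw [key]
  refine setLIntegral_congr_fun measurableSet_Ioo fun y hy => ?_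
  have hw := one_add_mul_pos hd hy
  have hv := one_sub_sq_pos hy
  have hT := boostT_pos hd hy
  rw [← ENNReal.ofReal_mul (abs_nonneg _), hfT y hy, abs_of_pos (by positivity),
    Real.rpow_sub_one hT.ne']
  congr 1
  have : (1 - d ^ 2) / (1 + d * y) ^ 2 = boostT d y / (1 - y ^ 2) := by
    unfold boostT; field_simp
  rw [this]
  field_simp

lemma kappa0_pos {p : ℝ} (hp : 1 < p) : 0 < kappa0 p := by
  have : 0 < p - 1 := by linarith
  unfold kappa0
  positivity

lemma solKappa_mul {p d y : ℝ} (hd : d ∈ Set.Ioo (-1 : ℝ) 1) (hy : y ∈ Set.Ioo (-1 : ℝ) 1) :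
    solKappa p d y * (1 - y ^ 2) ^ ((1 : ℝ) / (p - 1)) =
      kappa0 p * boostT d y ^ ((1 : ℝ) / (p - 1)) := by
  have hw := one_add_mul_pos hd hy
  have hv := one_sub_sq_pos hy
  have hu := one_sub_sq_pos hd
  have h2 : (1 + d * y) ^ ((2 : ℝ) / (p - 1)) = ((1 + d * y) ^ 2) ^ ((1 : ℝ) / (p - 1)) := by
    rw [← Real.rpow_natCast, ← Real.rpow_mul hw.le]
    congr 1
    push_cast
    ring
  unfold solKappa boostT
  rw [h2, Real.div_rpow (by positivity) (by positivity), Real.mul_rpow hu.le hv.le]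
  ring

lemma rpow_two_div {x : ℝ} (p : ℝ) (hx : 0 < x) :
    x ^ ((2 : ℝ) / (p - 1)) = (x ^ ((1 : ℝ) / (p - 1))) ^ 2 := by
  rw [← Real.rpow_natCast, ← Real.rpow_mul hx.le]
  congr 1
  push_cast
  ring

lemma solKappa_sq_mul_rho {p d y : ℝ} (hd : d ∈ Set.Ioo (-1 : ℝ) 1)
    (hy : y ∈ Set.Ioo (-1 : ℝ) 1) :
    solKappa p d y ^ 2 * rho p y = kappa0 p ^ 2 * boostT d y ^ ((2 : ℝ) / (p - 1)) := by
  unfold rho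
  rw [rpow_two_div p (one_sub_sq_pos hy), rpow_two_div p (boostT_pos hd hy), ← mul_pow,
    solKappa_mul hd hy, mul_pow]

lemma solKappa_pos {p d y : ℝ} (hp : 1 < p) (hd : d ∈ Set.Ioo (-1 : ℝ) 1)
    (hy : y ∈ Set.Ioo (-1 : ℝ) 1) : 0 < solKappa p d y := by
  have hw := one_add_mul_pos hd hy
  have hu := one_sub_sq_pos hd
  have := kappa0_pos hp
  unfold solKappa
  positivity

lemma solKappa_rpow_mul_rho_le {p d y : ℝ} (hp : 1 < p) (hd : d ∈ Set.Ioo (-1 : ℝ) 1)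
    (hy : y ∈ Set.Ioo (-1 : ℝ) 1) :
    solKappa p d y ^ (p + 1) * rho p y ≤
      kappa0 p ^ (p + 1) * (boostT d y ^ ((2 : ℝ) / (p - 1)) / (1 - y ^ 2)) := by
  have hv := one_sub_sq_pos hy
  have hT := boostT_pos hd hy
  have hκ := solKappa_pos hp hd hy
  have hK := kappa0_pos hp
  have hp1 : p - 1 ≠ 0 := by linarith
  -- `(p + 1) / (p - 1) = 2 / (p - 1) + 1` when `x ^ (1 / (p - 1))` is raised to the power `p + 1`
  have hexp : ∀ x : ℝ, 0 < x →
      (x ^ ((1 : ℝ) / (p - 1))) ^ (p + 1) = x ^ ((2 : ℝ) / (p - 1)) * x := by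
    intro x hx
    rw [← Real.rpow_mul hx.le, ← Real.rpow_add_one hx.ne']
    congr 1
    field_simp
    ring
  have h := congrArg (fun x : ℝ => x ^ (p + 1)) (solKappa_mul (p := p) hd hy)
  rw [Real.mul_rpow hκ.le (by positivity), Real.mul_rpow hK.le (by positivity), hexp _ hv,
    hexp _ hT] at h
  have h' : solKappa p d y ^ (p + 1) * rho p y =
      kappa0 p ^ (p + 1) * (boostT d y ^ ((2 : ℝ) / (p - 1)) / (1 - y ^ 2)) * boostT d y := by
    unfold rho
    field_simp
    linarith
  rw [h']
  exact mul_le_of_le_one_right (by positivity) (boostT_le_one hd hy)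

lemma deriv_solKappa {p d y : ℝ} (hd : d ∈ Set.Ioo (-1 : ℝ) 1) (hy : y ∈ Set.Ioo (-1 : ℝ) 1) :
    deriv (solKappa p d) y = -(2 / (p - 1)) * d / (1 + d * y) * solKappa p d y := by
  have hw := one_add_mul_pos hd hy
  have h2 : HasDerivAt (fun y : ℝ => 1 + d * y) d y := by
    simpa using ((hasDerivAt_id y).const_mul d).const_add 1
  have h3 := h2.rpow_const (p := (2 : ℝ) / (p - 1)) (Or.inl hw.ne')
  have h4 := (hasDerivAt_const y (kappa0 p * (1 - d ^ 2) ^ ((1 : ℝ) / (p - 1)))).div h3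
    (by positivity)
  have h5 : HasDerivAt (solKappa p d) _ y := h4
  rw [h5.deriv, Real.rpow_sub_one hw.ne']
  unfold solKappa
  have hne : (1 + d * y) ^ ((2 : ℝ) / (p - 1)) ≠ 0 := by positivity
  generalize (1 + d * y) ^ ((2 : ℝ) / (p - 1)) = W at *
  field_simp
  ring

lemma energy_integrand_le {p d y : ℝ} (hd : d ∈ Set.Ioo (-1 : ℝ) 1)
    (hy : y ∈ Set.Ioo (-1 : ℝ) 1) :
    (solKappa p d y ^ 2 + (deriv (solKappa p d) y) ^ 2 * (1 - y ^ 2)) * rho p y ≤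
      kappa0 p ^ 2 * (1 + 4 * (2 / (p - 1)) ^ 2) *
        (boostT d y ^ ((2 : ℝ) / (p - 1)) / (1 - y ^ 2)) := by
  have hw := one_add_mul_pos hd hy
  have hv := one_sub_sq_pos hy
  have hT := boostT_pos hd hy
  have hd2 : d ^ 2 ≤ 1 := by linarith [one_sub_sq_pos hd]
  have hq0 : 0 ≤ (1 - y ^ 2) / (1 + d * y) := by positivity
  have hq : (1 - y ^ 2) / (1 + d * y) ≤ 2 := by
    rw [div_le_iff₀ hw]
    obtain ⟨h1, h2⟩ := hd
    obtain ⟨h3, h4⟩ := hy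
    -- `1 - y² ≤ 2 (1 - |y|) ≤ 2 (1 + d y)`
    rcases le_total 0 y with h | h
    · nlinarith [mul_nonneg h (by linarith : (0 : ℝ) ≤ 1 + d), sq_nonneg (1 - y)]
    · nlinarith [mul_nonneg (neg_nonneg.2 h) (by linarith : (0 : ℝ) ≤ 1 - d), sq_nonneg (1 + y)]
  have hq2 : d ^ 2 * ((1 - y ^ 2) / (1 + d * y)) ^ 2 ≤ 4 := by
    have : ((1 - y ^ 2) / (1 + d * y)) ^ 2 ≤ 4 := by nlinarith
    nlinarith [sq_nonneg ((1 - y ^ 2) / (1 + d * y))]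
  have e : (solKappa p d y ^ 2 + (deriv (solKappa p d) y) ^ 2 * (1 - y ^ 2)) * rho p y =
      (solKappa p d y ^ 2 * rho p y) / (1 - y ^ 2) * ((1 - y ^ 2) +
        (2 / (p - 1)) ^ 2 * (d ^ 2 * ((1 - y ^ 2) / (1 + d * y)) ^ 2)) := by
    rw [deriv_solKappa hd hy]
    generalize 2 / (p - 1) = c
    field_simp
  rw [e, solKappa_sq_mul_rho hd hy]
  have h6 : (1 - y ^ 2) + (2 / (p - 1)) ^ 2 * (d ^ 2 * ((1 - y ^ 2) / (1 + d * y)) ^ 2) ≤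
      1 + 4 * (2 / (p - 1)) ^ 2 := by
    have := mul_le_mul_of_nonneg_left hq2 (sq_nonneg (2 / (p - 1)))
    nlinarith [sq_nonneg y]
  refine (mul_le_mul_of_nonneg_left h6 (by positivity)).trans_eq ?_
  ring

theorem stmt2 (p : ℝ) (hp : 1 < p) :
    ∃ C : ℝ, 0 < C ∧ ∀ d ∈ Set.Ioo (-1 : ℝ) 1,
      (∫⁻ y in Set.Ioo (-1 : ℝ) 1,
          ENNReal.ofReal (solKappa p d y ^ 2 * rho p y / (1 - y ^ 2))) ≤ ENNReal.ofReal C ∧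
      (∫⁻ y in Set.Ioo (-1 : ℝ) 1,
          ENNReal.ofReal (solKappa p d y ^ (p + 1) * rho p y)) ≤ ENNReal.ofReal C ∧
      (∀ y ∈ Set.Ioo (-1 : ℝ) 1,
          solKappa p d y * (1 - y ^ 2) ^ ((1 : ℝ) / (p - 1)) ≤ C) ∧
      (∫⁻ y in Set.Ioo (-1 : ℝ) 1,
          ENNReal.ofReal ((solKappa p d y ^ 2
            + (deriv (solKappa p d) y) ^ 2 * (1 - y ^ 2)) * rho p y)) ^ ((1 : ℝ) / 2)
        ≤ ENNReal.ofReal C := by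
  have hp1 : 0 < p - 1 := by linarith
  have hK := kappa0_pos hp
  have hfin := lintegral_weight_lt_top (b := 2 / (p - 1) - 1)
    (by have : 0 < 2 / (p - 1) := by positivity
        linarith)
  set M := ∫⁻ z in Set.Ioo (-1 : ℝ) 1, ENNReal.ofReal ((1 - z ^ 2) ^ (2 / (p - 1) - 1)) with hM
  set m := M.toReal with hm
  have hm0 : 0 ≤ m := ENNReal.toReal_nonneg
  have hMm : M = ENNReal.ofReal m := (ENNReal.ofReal_toReal hfin.ne).symm
  have main : ∀ d ∈ Set.Ioo (-1 : ℝ) 1, ∀ (A : ℝ) (F : ℝ → ℝ), 0 ≤ A →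
      (∀ y ∈ Set.Ioo (-1 : ℝ) 1,
        F y ≤ A * (boostT d y ^ ((2 : ℝ) / (p - 1)) / (1 - y ^ 2))) →
      ∫⁻ y in Set.Ioo (-1 : ℝ) 1, ENNReal.ofReal (F y) ≤ ENNReal.ofReal (A * m) := by
    intro d hd A F hA hF
    calc ∫⁻ y in Set.Ioo (-1 : ℝ) 1, ENNReal.ofReal (F y)
        ≤ ∫⁻ y in Set.Ioo (-1 : ℝ) 1, ENNReal.ofReal A *
            ENNReal.ofReal (boostT d y ^ ((2 : ℝ) / (p - 1)) / (1 - y ^ 2)) := by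
          refine setLIntegral_mono' measurableSet_Ioo fun y hy => ?_
          rw [← ENNReal.ofReal_mul hA]
          exact ENNReal.ofReal_le_ofReal (hF y hy)
      _ = ENNReal.ofReal A * ∫⁻ y in Set.Ioo (-1 : ℝ) 1,
            ENNReal.ofReal (boostT d y ^ ((2 : ℝ) / (p - 1)) / (1 - y ^ 2)) :=
          lintegral_const_mul' _ _ ENNReal.ofReal_ne_top
      _ ≤ ENNReal.ofReal A * M := by
          gcongr
          exact lintegral_majorant_le hd
      _ = ENNReal.ofReal (A * m) := by rw [hMm, ENNReal.ofReal_mul hA]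
  set B := kappa0 p ^ 2 * (1 + 4 * (2 / (p - 1)) ^ 2) with hB
  have hB0 : 0 ≤ B := by positivity
  have t1 : 0 ≤ kappa0 p ^ 2 * m := by positivity
  have t2 : 0 ≤ kappa0 p ^ (p + 1) * m := by positivity
  have t3 : 0 ≤ B * m := by positivity
  -- The summand `1` makes `C ≤ C²`, so that a bound by `C` survives the square root.
  refine ⟨1 + kappa0 p + kappa0 p ^ 2 * m + kappa0 p ^ (p + 1) * m + B * m, by linarith,
    fun d hd => ⟨?_, ?_, ?_, ?_⟩⟩
  · refine (main d hd (kappa0 p ^ 2) _ (by positivity) fun y hy => ?_).trans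
      (ENNReal.ofReal_le_ofReal (by linarith))
    rw [solKappa_sq_mul_rho hd hy, mul_div_assoc]
  · exact (main d hd (kappa0 p ^ (p + 1)) _ (by positivity) fun y hy =>
      solKappa_rpow_mul_rho_le hp hd hy).trans (ENNReal.ofReal_le_ofReal (by linarith))
  · intro y hy
    rw [solKappa_mul hd hy]
    have := Real.rpow_le_one (boostT_pos hd hy).le (boostT_le_one hd hy)
      (show 0 ≤ (1 : ℝ) / (p - 1) by positivity)
    have := mul_le_of_le_one_right hK.le this
    linarith
  · refine (ENNReal.rpow_le_rpow (main d hd B _ hB0 fun y hy => energy_integrand_le hd hy)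
      (by norm_num)).trans ?_
    rw [ENNReal.ofReal_rpow_of_nonneg t3 (by norm_num), ← Real.sqrt_eq_rpow]
    refine ENNReal.ofReal_le_ofReal (Real.sqrt_le_iff.2 ⟨by linarith, ?_⟩)
    nlinarith
end

section
/- For every real p > 1 there exists a constant C > 0 such that for every d ∈ (−1,1) and every ν > −1+|d|, the generalized soliton satisfies ‖κ*(d,ν,·)‖_H ≤ C λ(d,ν) + C · 1_{{ν<0}} (|ν|/√(1−d²)) λ(d,ν)^{(p+1)/2}, where λ(d,ν) = (1−d²)^{1/(p−1)} / [(1+ν)² − d²]^{1/(p−1)} and 1_{{ν<0}} equals 1 if ν < 0 and 0 otherwise. -/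
/-!
Put `a = 2 / (p - 1)`, `m = 1 + ν`, `w = m + d y` and `M = m² - d²`. Since
`κ₁*' = -a d κ₀ (1 - d²)^(a/2) w^(-a-1)`, the squared norm is `κ₀² (1 - d²)^a` times the integral of
`w^(-2a) (1-y²)^a + a² d² (1-y²) w^(-2a-2) (1-y²)^a + a² ν² w^(-2a-2) (1-y²)^a`,
and the squared right-hand side is comparable to `(1 - d²)^a` times
`M^(-a) + 1_{ν<0} ν² M^(-a-1)`.

Everything rests on the identity `w² - (1-y²) M = (d + m y)²`, which gives the pointwise bound
`(1-y²)^a w^(-2a) ≤ M^(-a)` (`base_bound`). This settles the first term. For the third it leaves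
`∫ w⁻² = 2 / M` (`integral_inv_sq`), hence a bound `2 ν² M^(-a-1)`; when `ν ≥ 0`,
`M ≥ (1+ν)² - 1 ≥ ν²` absorbs the factor `ν² / M`. The second term (`grad_bound`) is dominated by
`M^(-a)` pointwise if `2|d| ≤ m`. Otherwise `|d| (1-y²) ≤ 2 w` reduces it to
`|d|^(1-a) ∫ w^(-a-1) ≤ |d|^(-a) (m - |d|)^(-a) / a`, and `m + |d| ≤ 3 |d|` recovers `M^(-a)`.
-/

open MeasureTheory

noncomputable def kappa1star (p d ν y : ℝ) : ℝ :=
  kappa0 p * (1 - d ^ 2) ^ ((1 : ℝ) / (p - 1)) / (1 + d * y + ν) ^ ((2 : ℝ) / (p - 1))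

noncomputable def kappa2star (p d ν y : ℝ) : ℝ :=
  -(2 * kappa0 p * ν / (p - 1)) * (1 - d ^ 2) ^ ((1 : ℝ) / (p - 1))
    / (1 + d * y + ν) ^ ((p + 1) / (p - 1))

noncomputable def lam (p d ν : ℝ) : ℝ :=
  (1 - d ^ 2) ^ ((1 : ℝ) / (p - 1)) / ((1 + ν) ^ 2 - d ^ 2) ^ ((1 : ℝ) / (p - 1))

namespace SolitonBound

variable {a m d y : ℝ}

/-! ### Pointwise bounds -/

lemma w_pos (h : |d| < m) (hy : y ∈ Set.Icc (-1 : ℝ) 1) : 0 < m + d * y := by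
  have h1 : |d * y| ≤ |d| := by
    rw [abs_mul]
    exact mul_le_of_le_one_right (abs_nonneg _) (abs_le.2 hy)
  have := neg_abs_le (d * y)
  linarith

lemma M_pos (h : |d| < m) : 0 < m ^ 2 - d ^ 2 := by
  have := abs_nonneg d
  rw [← sq_abs d]
  nlinarith

lemma one_sub_sq_nonneg (hy : y ∈ Set.Icc (-1 : ℝ) 1) : 0 ≤ 1 - y ^ 2 := by
  nlinarith [hy.1, hy.2]

lemma rpow_neg_two_mul {w : ℝ} (hw : 0 < w) : w ^ (-(2 * a)) = ((w ^ 2)⁻¹) ^ a := by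
  rw [Real.inv_rpow (by positivity), ← Real.rpow_natCast, ← Real.rpow_mul hw.le,
    ← Real.rpow_neg hw.le]
  norm_num

lemma rpow_neg_two_mul_add {w : ℝ} (hw : 0 < w) :
    w ^ (-(2 * a + 2)) = w ^ (-(2 * a)) * (w ^ 2)⁻¹ := by
  rw [neg_add, Real.rpow_add hw, Real.rpow_neg hw.le 2]
  norm_num

/-- Consequence of `(m + d y)² - (1 - y²) (m² - d²) = (d + m y)² ≥ 0`. -/
lemma base_bound (ha : 0 < a) (h : |d| < m) (hy : y ∈ Set.Icc (-1 : ℝ) 1) :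
    (m + d * y) ^ (-(2 * a)) * (1 - y ^ 2) ^ a ≤ (m ^ 2 - d ^ 2) ^ (-a) := by
  have hw := w_pos h hy
  have hM := M_pos h
  have hq := one_sub_sq_nonneg hy
  rw [rpow_neg_two_mul hw, ← Real.mul_rpow (by positivity) hq, Real.rpow_neg hM.le,
    ← Real.inv_rpow hM.le]
  apply Real.rpow_le_rpow (by positivity) _ ha.le
  rw [inv_mul_eq_div, ← one_div, div_le_div_iff₀ (by positivity) hM]
  nlinarith [sq_nonneg (d + m * y)]

/-! ### Integrals of powers of the weight `m + d y` -/

lemma cont_w (h : |d| < m) (s : ℝ) :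
    ContinuousOn (fun y => (m + d * y) ^ s) (Set.Icc (-1 : ℝ) 1) := by
  apply ContinuousOn.rpow_const (by fun_prop)
  intro y hy
  exact Or.inl (w_pos h hy).ne'

lemma cont_q (ha : 0 < a) : Continuous (fun y : ℝ => (1 - y ^ 2) ^ a) := by
  apply Continuous.rpow_const (by fun_prop)
  intro y
  exact Or.inr ha.le

lemma cont_inv_sq (h : |d| < m) :
    ContinuousOn (fun y => ((m + d * y) ^ 2)⁻¹) (Set.Icc (-1 : ℝ) 1) := by
  apply ContinuousOn.inv₀ (by fun_prop)
  intro y hy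
  exact pow_ne_zero _ (w_pos h hy).ne'

lemma ii {f : ℝ → ℝ} (hf : ContinuousOn f (Set.Icc (-1 : ℝ) 1)) :
    IntervalIntegrable f volume (-1) 1 :=
  ContinuousOn.intervalIntegrable_of_Icc (by norm_num) hf

/-- The antiderivative `(d + m y) / (m + d y) / (m² - d²)` takes the values `± 1 / (m² - d²)` at
`± 1`, and needs no distinction of the case `d = 0`. -/
lemma integral_inv_sq (h : |d| < m) :
    ∫ y in (-1 : ℝ)..1, ((m + d * y) ^ 2)⁻¹ = 2 / (m ^ 2 - d ^ 2) := by
  have hM := M_pos h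
  have key : ∀ y ∈ Set.uIcc (-1 : ℝ) 1,
      HasDerivAt (fun y => (d + m * y) / (m + d * y) / (m ^ 2 - d ^ 2))
        (((m + d * y) ^ 2)⁻¹) y := by
    intro y hy
    rw [Set.uIcc_of_le (by norm_num)] at hy
    have hw := w_pos h hy
    have h1 : HasDerivAt (fun y : ℝ => d + m * y) m y := by
      simpa using ((hasDerivAt_id y).const_mul m).const_add d
    have h2 : HasDerivAt (fun y : ℝ => m + d * y) d y := by
      simpa using ((hasDerivAt_id y).const_mul d).const_add m
    refine ((h1.div h2 hw.ne').div_const (m ^ 2 - d ^ 2)).congr_deriv ?_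
    rw [show m * (m + d * y) - (d + m * y) * d = m ^ 2 - d ^ 2 by ring, div_right_comm,
      div_self hM.ne', one_div]
  rw [intervalIntegral.integral_eq_sub_of_hasDerivAt key (ii (cont_inv_sq h))]
  have h1 := w_pos (y := 1) h (by norm_num)
  have h2 := w_pos (y := -1) h (by norm_num)
  have e1 : (d + m * 1) / (m + d * 1) = 1 := by
    rw [div_eq_one_iff_eq h1.ne']; ring
  have e2 : (d + m * (-1)) / (m + d * (-1)) = -1 := by
    rw [div_eq_iff h2.ne']; ring
  rw [e1, e2]
  ring

lemma integral_rpow_bound (ha : 0 < a) (h : |d| < m) (hd : d ≠ 0) :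
    ∫ y in (-1 : ℝ)..1, (m + d * y) ^ (-a - 1) ≤ (m - |d|) ^ (-a) / (a * |d|) := by
  have key : ∀ y ∈ Set.uIcc (-1 : ℝ) 1,
      HasDerivAt (fun y => (m + d * y) ^ (-a) / (-a * d)) ((m + d * y) ^ (-a - 1)) y := by
    intro y hy
    rw [Set.uIcc_of_le (by norm_num)] at hy
    have hw := w_pos h hy
    have h2 : HasDerivAt (fun y : ℝ => m + d * y) d y := by
      simpa using ((hasDerivAt_id y).const_mul d).const_add m
    refine ((h2.rpow_const (p := -a) (Or.inl hw.ne')).div_const (-a * d)).congr_deriv ?_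
    field_simp
  rw [intervalIntegral.integral_eq_sub_of_hasDerivAt key (ii (cont_w h _))]
  have h1 := w_pos (y := 1) h (by norm_num)
  have h2 := w_pos (y := -1) h (by norm_num)
  have p1 := Real.rpow_nonneg h1.le (-a)
  have p2 := Real.rpow_nonneg h2.le (-a)
  rcases lt_or_gt_of_ne hd with hn | hn
  · have e : m - |d| = m + d * 1 := by rw [abs_of_neg hn]; ring
    rw [e, abs_of_neg hn, show -a * d = a * -d by ring, ← sub_div]
    have : 0 < a * -d := mul_pos ha (by linarith)
    gcongr
    linarith
  · have e : m - |d| = m + d * (-1) := by rw [abs_of_pos hn]; ring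
    rw [e, abs_of_pos hn, ← sub_div, neg_mul, div_neg, ← neg_div]
    have : 0 < a * d := mul_pos ha hn
    gcongr
    linarith

lemma abs_mul_le (h : |d| < m) (hy : y ∈ Set.Icc (-1 : ℝ) 1) :
    |d| * (1 - y ^ 2) ≤ 2 * (m + d * y) := by
  obtain ⟨h1, h2⟩ := hy
  rcases abs_cases d with ⟨e, hd⟩ | ⟨e, hd⟩ <;> rw [e] at h ⊢
  · nlinarith [mul_nonneg hd (sq_nonneg (1 + y))]
  · nlinarith [mul_nonneg (neg_nonneg.2 hd.le) (sq_nonneg (1 - y))]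

/-! ### The three terms of the squared norm -/

/-- The gradient term. The logarithm that the bound of `base_bound` alone would produce is avoided
by integrating `w^(-a-1)` exactly when `|d|` is comparable to `m`. -/
lemma grad_bound (ha : 0 < a) (h : |d| < m) :
    ∫ y in (-1 : ℝ)..1, d ^ 2 * (1 - y ^ 2) * (m + d * y) ^ (-(2 * a + 2)) * (1 - y ^ 2) ^ a
      ≤ (2 + 2 ^ (a + 1) * 3 ^ a / a) * (m ^ 2 - d ^ 2) ^ (-a) := by
  have hM := M_pos h
  have hMa := Real.rpow_nonneg hM.le (-a)
  have hcont : ContinuousOn (fun y : ℝ =>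
      d ^ 2 * (1 - y ^ 2) * (m + d * y) ^ (-(2 * a + 2)) * (1 - y ^ 2) ^ a)
      (Set.Icc (-1 : ℝ) 1) :=
    ((by fun_prop : ContinuousOn (fun y : ℝ => d ^ 2 * (1 - y ^ 2)) _).mul (cont_w h _)).mul
      (cont_q ha).continuousOn
  have hC : (0 : ℝ) ≤ 2 ^ (a + 1) * 3 ^ a / a := by positivity
  rcases le_or_gt (2 * |d|) m with hc | hc
  -- If `2 |d| ≤ m` then `|d| ≤ w`, so the factor `d² (1 - y²) / w²` is at most `1`.
  · have hpt : ∀ y ∈ Set.Icc (-1 : ℝ) 1,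
        d ^ 2 * (1 - y ^ 2) * (m + d * y) ^ (-(2 * a + 2)) * (1 - y ^ 2) ^ a
          ≤ (m ^ 2 - d ^ 2) ^ (-a) := by
      intro y hy
      have hw := w_pos h hy
      have hq := one_sub_sq_nonneg hy
      have hb := base_bound ha h hy
      have hwd : |d| ≤ m + d * y := by
        have h1 : |d * y| ≤ |d| := by
          rw [abs_mul]
          exact mul_le_of_le_one_right (abs_nonneg _) (abs_le.2 hy)
        have := neg_abs_le (d * y)
        linarith
      have hle : d ^ 2 * (1 - y ^ 2) * ((m + d * y) ^ 2)⁻¹ ≤ 1 := by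
        rw [← div_eq_mul_inv, div_le_one (by positivity)]
        have := pow_le_pow_left₀ (abs_nonneg d) hwd 2
        rw [sq_abs] at this
        nlinarith [sq_nonneg (d * y)]
      rw [rpow_neg_two_mul_add hw]
      calc _ = (d ^ 2 * (1 - y ^ 2) * ((m + d * y) ^ 2)⁻¹)
              * ((m + d * y) ^ (-(2 * a)) * (1 - y ^ 2) ^ a) := by ring
        _ ≤ 1 * (m ^ 2 - d ^ 2) ^ (-a) :=
            mul_le_mul hle hb (by positivity) zero_le_one
        _ = _ := one_mul _
    have := intervalIntegral.integral_mono_on (by norm_num) (ii hcont)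
      (ii (continuousOn_const (c := (m ^ 2 - d ^ 2) ^ (-a)))) hpt
    refine this.trans ?_
    rw [intervalIntegral.integral_const, smul_eq_mul]
    nlinarith
  · have hd : 0 < |d| := by
      by_contra hcon
      have := abs_nonneg d
      linarith
    have hpt : ∀ y ∈ Set.Icc (-1 : ℝ) 1,
        d ^ 2 * (1 - y ^ 2) * (m + d * y) ^ (-(2 * a + 2)) * (1 - y ^ 2) ^ a
          ≤ 2 ^ (a + 1) * |d| ^ (1 - a) * (m + d * y) ^ (-a - 1) := by
      intro y hy
      have hw := w_pos h hy
      have hq := one_sub_sq_nonneg hy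
      have h1 : (|d| * (1 - y ^ 2)) ^ (a + 1) ≤ 2 ^ (a + 1) * (m + d * y) ^ (a + 1) := by
        rw [← Real.mul_rpow (by norm_num) hw.le]
        exact Real.rpow_le_rpow (by positivity) (abs_mul_le h hy) (by linarith)
      have e1 : d ^ 2 = |d| ^ (1 - a) * |d| ^ (a + 1) := by
        rw [← Real.rpow_add hd, show 1 - a + (a + 1) = ((2 : ℕ) : ℝ) by push_cast; ring,
          Real.rpow_natCast, sq_abs]
      have e2 : (1 - y ^ 2) * (1 - y ^ 2) ^ a = (1 - y ^ 2) ^ (a + 1) := by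
        rw [Real.rpow_add_of_nonneg hq ha.le zero_le_one, Real.rpow_one, mul_comm]
      have e3 : (m + d * y) ^ (-a - 1) = (m + d * y) ^ (a + 1) * (m + d * y) ^ (-(2 * a + 2)) := by
        rw [← Real.rpow_add hw]
        ring_nf
      calc _ = |d| ^ (1 - a) * (m + d * y) ^ (-(2 * a + 2)) * (|d| * (1 - y ^ 2)) ^ (a + 1) := by
            rw [Real.mul_rpow hd.le hq, ← e2, e1]; ring
        _ ≤ |d| ^ (1 - a) * (m + d * y) ^ (-(2 * a + 2)) *
              (2 ^ (a + 1) * (m + d * y) ^ (a + 1)) := by gcongr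
        _ = _ := by rw [e3]; ring
    have := intervalIntegral.integral_mono_on (by norm_num) (ii hcont)
      (ii ((cont_w h (-a - 1)).const_mul (2 ^ (a + 1) * |d| ^ (1 - a)))) hpt
    refine this.trans ?_
    rw [intervalIntegral.integral_const_mul]
    have hmd : 0 < m - |d| := by linarith
    have hint := integral_rpow_bound ha h (abs_pos.1 hd)
    have e4 : |d| ^ (1 - a) = |d| ^ (-a) * |d| := by
      rw [sub_eq_neg_add, Real.rpow_add hd, Real.rpow_one]
    have e5 : (m ^ 2 - d ^ 2) ^ (-a) = (m + |d|) ^ (-a) * (m - |d|) ^ (-a) := by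
      rw [← Real.mul_rpow (by linarith) hmd.le, ← sq_abs d]
      ring_nf
    have h3 : |d| ^ (-a) ≤ 3 ^ a * (m + |d|) ^ (-a) := by
      have : (3 * |d|) ^ (-a) ≤ (m + |d|) ^ (-a) :=
        Real.rpow_le_rpow_of_nonpos (by linarith) (by linarith) (by linarith)
      rw [Real.mul_rpow (by norm_num) hd.le, Real.rpow_neg (by norm_num)] at this
      rwa [inv_mul_le_iff₀ (by positivity)] at this
    calc _ ≤ 2 ^ (a + 1) * |d| ^ (1 - a) * ((m - |d|) ^ (-a) / (a * |d|)) := by gcongr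
      _ = 2 ^ (a + 1) / a * (m - |d|) ^ (-a) * |d| ^ (-a) := by
          rw [e4]; field_simp
      _ ≤ 2 ^ (a + 1) / a * (m - |d|) ^ (-a) * (3 ^ a * (m + |d|) ^ (-a)) := by gcongr
      _ = 2 ^ (a + 1) * 3 ^ a / a * (m ^ 2 - d ^ 2) ^ (-a) := by rw [e5]; ring
      _ ≤ _ := by gcongr; linarith

lemma mass_bound (ha : 0 < a) (h : |d| < m) :
    ∫ y in (-1 : ℝ)..1, (m + d * y) ^ (-(2 * a)) * (1 - y ^ 2) ^ a
      ≤ 2 * (m ^ 2 - d ^ 2) ^ (-a) := by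
  have := intervalIntegral.integral_mono_on (by norm_num)
    (ii ((cont_w h (-(2 * a))).mul (cont_q ha).continuousOn))
    (ii (continuousOn_const (c := (m ^ 2 - d ^ 2) ^ (-a)))) (fun y hy => base_bound ha h hy)
  refine this.trans (le_of_eq ?_)
  rw [intervalIntegral.integral_const, smul_eq_mul]
  norm_num

lemma time_bound (ha : 0 < a) (h : |d| < m) :
    ∫ y in (-1 : ℝ)..1, (m + d * y) ^ (-(2 * a + 2)) * (1 - y ^ 2) ^ a
      ≤ 2 * (m ^ 2 - d ^ 2) ^ (-a) * (m ^ 2 - d ^ 2)⁻¹ := by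
  have := intervalIntegral.integral_mono_on (by norm_num)
    (ii ((cont_w h (-(2 * a + 2))).mul (cont_q ha).continuousOn))
    (ii ((cont_inv_sq h).const_mul ((m ^ 2 - d ^ 2) ^ (-a)))) (fun y hy => by
      have hw := w_pos h hy
      have hb := base_bound ha h hy
      simp only [Pi.mul_apply]
      rw [rpow_neg_two_mul_add hw]
      calc _ = (m + d * y) ^ (-(2 * a)) * (1 - y ^ 2) ^ a * ((m + d * y) ^ 2)⁻¹ := by ring
        _ ≤ _ := by gcongr)
  refine this.trans (le_of_eq ?_)
  rw [intervalIntegral.integral_const_mul, integral_inv_sq h]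
  ring

/-- Bound for the squared norm divided by `κ₀² (1 - d²)^a`. -/
lemma total_bound (ha : 0 < a) {ν : ℝ} (hd : d ∈ Set.Ioo (-1 : ℝ) 1) (h : |d| < 1 + ν) :
    ∫ y in (-1 : ℝ)..1, ((1 + ν + d * y) ^ (-(2 * a)) * (1 - y ^ 2) ^ a
        + a ^ 2 * (d ^ 2 * (1 - y ^ 2) * (1 + ν + d * y) ^ (-(2 * a + 2)) * (1 - y ^ 2) ^ a)
        + a ^ 2 * ν ^ 2 * ((1 + ν + d * y) ^ (-(2 * a + 2)) * (1 - y ^ 2) ^ a))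
      ≤ (2 + a ^ 2 * (2 + 2 ^ (a + 1) * 3 ^ a / a) + 2 * a ^ 2) *
        (((1 + ν) ^ 2 - d ^ 2) ^ (-a) + (if ν < 0 then 1 else 0) *
          (ν ^ 2 * ((1 + ν) ^ 2 - d ^ 2) ^ (-a) * ((1 + ν) ^ 2 - d ^ 2)⁻¹)) := by
  have hq := (cont_q ha).continuousOn (s := Set.Icc (-1 : ℝ) 1)
  have c1 : ContinuousOn (fun y : ℝ => (1 + ν + d * y) ^ (-(2 * a)) * (1 - y ^ 2) ^ a)
      (Set.Icc (-1 : ℝ) 1) := (cont_w h (-(2 * a))).mul hq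
  have c3 : ContinuousOn (fun y : ℝ => (1 + ν + d * y) ^ (-(2 * a + 2)) * (1 - y ^ 2) ^ a)
      (Set.Icc (-1 : ℝ) 1) := (cont_w h (-(2 * a + 2))).mul hq
  have c2 : ContinuousOn (fun y : ℝ =>
      d ^ 2 * (1 - y ^ 2) * (1 + ν + d * y) ^ (-(2 * a + 2)) * (1 - y ^ 2) ^ a)
      (Set.Icc (-1 : ℝ) 1) :=
    ((by fun_prop : ContinuousOn (fun y : ℝ => d ^ 2 * (1 - y ^ 2)) _).mul (cont_w h _)).mul hq
  have c2' := c2.const_mul (a ^ 2)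
  have c12 : ContinuousOn (fun y : ℝ => (1 + ν + d * y) ^ (-(2 * a)) * (1 - y ^ 2) ^ a +
      a ^ 2 * (d ^ 2 * (1 - y ^ 2) * (1 + ν + d * y) ^ (-(2 * a + 2)) * (1 - y ^ 2) ^ a))
      (Set.Icc (-1 : ℝ) 1) := c1.add c2'
  have c3' := c3.const_mul (a ^ 2 * ν ^ 2)
  rw [intervalIntegral.integral_add (ii c12) (ii c3'),
    intervalIntegral.integral_add (ii c1) (ii c2'),
    intervalIntegral.integral_const_mul, intervalIntegral.integral_const_mul]
  have b1 := mass_bound ha h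
  have b2 := grad_bound ha h
  have b3 := time_bound ha h
  have hM := M_pos h
  have hMa := Real.rpow_nonneg hM.le (-a)
  have hB : (0 : ℝ) ≤ 2 + 2 ^ (a + 1) * 3 ^ a / a := by positivity
  set M := (1 + ν) ^ 2 - d ^ 2 with hMdef
  set B : ℝ := 2 + 2 ^ (a + 1) * 3 ^ a / a
  have b2' := mul_le_mul_of_nonneg_left b2 (sq_nonneg a)
  have b3' := mul_le_mul_of_nonneg_left b3 (by positivity : 0 ≤ a ^ 2 * ν ^ 2)
  have hX : 0 ≤ ν ^ 2 * M ^ (-a) * M⁻¹ := by positivity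
  split_ifs with hν
  · have t1 : 0 ≤ (2 + a ^ 2 * B) * (ν ^ 2 * M ^ (-a) * M⁻¹) := by positivity
    have t2 : 0 ≤ a ^ 2 * M ^ (-a) := by positivity
    linarith
  -- For `ν ≥ 0`, `M = ν² + 2 ν + (1 - d²) ≥ ν²`.
  · have hνM : ν ^ 2 * M⁻¹ ≤ 1 := by
      rw [← div_eq_mul_inv, div_le_one hM]
      nlinarith [hd.1, hd.2]
    have t : a ^ 2 * (2 * M ^ (-a)) * (ν ^ 2 * M⁻¹) ≤ a ^ 2 * (2 * M ^ (-a)) * 1 := by gcongr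
    linarith

/-! ### The soliton in terms of powers of `1 + ν + d y` -/

lemma kappa1_eq {p d ν y : ℝ} (hw : 0 < 1 + ν + d * y) :
    kappa1star p d ν y = kappa0 p * (1 - d ^ 2) ^ (1 / (p - 1)) *
      (1 + ν + d * y) ^ (-(2 / (p - 1))) := by
  rw [kappa1star, Real.rpow_neg hw.le, show 1 + d * y + ν = 1 + ν + d * y by ring]
  rfl

lemma kappa2_eq {p d ν y : ℝ} (hp : 1 < p) (hw : 0 < 1 + ν + d * y) :
    kappa2star p d ν y = -(2 / (p - 1) * ν) * (kappa0 p * (1 - d ^ 2) ^ (1 / (p - 1))) *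
      (1 + ν + d * y) ^ (-(2 / (p - 1)) - 1) := by
  have hp' : p - 1 ≠ 0 := by linarith
  have e : -(2 / (p - 1)) - 1 = -((p + 1) / (p - 1)) := by field_simp; ring
  rw [kappa2star, e, Real.rpow_neg hw.le, show 1 + d * y + ν = 1 + ν + d * y by ring]
  ring

lemma deriv_kappa1 {p d ν y : ℝ} (h : |d| < 1 + ν) (hy : y ∈ Set.Ioo (-1 : ℝ) 1) :
    deriv (kappa1star p d ν) y = -(2 / (p - 1) * d) *
      (kappa0 p * (1 - d ^ 2) ^ (1 / (p - 1))) * (1 + ν + d * y) ^ (-(2 / (p - 1)) - 1) := by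
  have hev : kappa1star p d ν =ᶠ[nhds y] fun y => kappa0 p * (1 - d ^ 2) ^ (1 / (p - 1)) *
      (1 + ν + d * y) ^ (-(2 / (p - 1))) := by
    filter_upwards [isOpen_Ioo.mem_nhds hy] with z hz
    exact kappa1_eq (w_pos h (Set.Ioo_subset_Icc_self hz))
  have hw := w_pos h (Set.Ioo_subset_Icc_self hy)
  have h2 : HasDerivAt (fun y : ℝ => 1 + ν + d * y) d y := by
    simpa using ((hasDerivAt_id y).const_mul d).const_add (1 + ν)
  rw [hev.deriv_eq, ((h2.rpow_const (p := -(2 / (p - 1))) (Or.inl hw.ne')).const_mul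
    (kappa0 p * (1 - d ^ 2) ^ (1 / (p - 1)))).deriv]
  ring

/-- The integrand of the squared norm in terms of `a = 2 / (p - 1)`. -/
lemma integrand_eq {p d ν y : ℝ} (hp : 1 < p) (ha : a = 2 / (p - 1)) (h : |d| < 1 + ν)
    (hd : d ∈ Set.Ioo (-1 : ℝ) 1) (hy : y ∈ Set.Ioo (-1 : ℝ) 1) :
    (kappa1star p d ν y ^ 2 + (deriv (kappa1star p d ν) y) ^ 2 * (1 - y ^ 2)
      + kappa2star p d ν y ^ 2) * rho p y =
    kappa0 p ^ 2 * (1 - d ^ 2) ^ a * ((1 + ν + d * y) ^ (-(2 * a)) * (1 - y ^ 2) ^ a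
        + a ^ 2 * (d ^ 2 * (1 - y ^ 2) * (1 + ν + d * y) ^ (-(2 * a + 2)) * (1 - y ^ 2) ^ a)
        + a ^ 2 * ν ^ 2 * ((1 + ν + d * y) ^ (-(2 * a + 2)) * (1 - y ^ 2) ^ a)) := by
  have hw := w_pos h (Set.Ioo_subset_Icc_self hy)
  have hd2 : 0 ≤ 1 - d ^ 2 := by nlinarith [hd.1, hd.2]
  rw [kappa1_eq hw, deriv_kappa1 h hy, kappa2_eq hp hw, rho, ← ha]
  have e1 : ((1 - d ^ 2) ^ (1 / (p - 1))) ^ 2 = (1 - d ^ 2) ^ a := by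
    rw [← Real.rpow_natCast, ← Real.rpow_mul hd2, ha]
    congr 1
    push_cast
    ring
  have e2 : ((1 + ν + d * y) ^ (-a)) ^ 2 = (1 + ν + d * y) ^ (-(2 * a)) := by
    rw [← Real.rpow_natCast, ← Real.rpow_mul hw.le]
    congr 1
    push_cast
    ring
  have e3 : ((1 + ν + d * y) ^ (-a - 1)) ^ 2 = (1 + ν + d * y) ^ (-(2 * a + 2)) := by
    rw [← Real.rpow_natCast, ← Real.rpow_mul hw.le]
    congr 1
    push_cast
    ring
  rw [← e1, ← e2, ← e3]
  ring

end SolitonBound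

/-! ### The norm estimate -/

open SolitonBound

theorem stmt4 (p : ℝ) (hp : 1 < p) :
    ∃ C : ℝ, 0 < C ∧ ∀ d ν : ℝ, d ∈ Set.Ioo (-1 : ℝ) 1 → -1 + |d| < ν →
      (∫⁻ y in Set.Ioo (-1 : ℝ) 1,
          ENNReal.ofReal ((kappa1star p d ν y ^ 2
            + (deriv (kappa1star p d ν) y) ^ 2 * (1 - y ^ 2)
            + kappa2star p d ν y ^ 2) * rho p y)) ^ ((1 : ℝ) / 2)
      ≤ ENNReal.ofReal (C * lam p d ν
          + C * (if ν < 0 then 1 else 0) * (|ν| / Real.sqrt (1 - d ^ 2))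
            * lam p d ν ^ ((p + 1) / 2)) := by
  have hp1 : 0 < p - 1 := by linarith
  obtain ⟨a, hadef⟩ : ∃ a, a = 2 / (p - 1) := ⟨_, rfl⟩
  have ha : 0 < a := by rw [hadef]; positivity
  set B : ℝ := 2 + a ^ 2 * (2 + 2 ^ (a + 1) * 3 ^ a / a) + 2 * a ^ 2 with hB
  have hBpos : 0 < B := by positivity
  have hk0 : 0 < kappa0 p := by
    have : 0 < p + 1 := by linarith
    unfold kappa0
    positivity
  -- The squared norm is at most `κ₀² B (λ² + χ Y²)`, where `χ` is the indicator of `ν < 0` and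
  -- `Y = |ν| / √(1 - d²) λ^((p+1)/2)`; as `χ² = χ`, this is at most `κ₀² B (λ + χ Y)²`.
  refine ⟨kappa0 p * Real.sqrt B, by positivity, fun d ν hd hν => ?_⟩
  have h : |d| < 1 + ν := by linarith
  have hM := M_pos h
  have hd2 : 0 < 1 - d ^ 2 := by nlinarith [hd.1, hd.2]
  have hlam : 0 ≤ lam p d ν := by unfold lam; positivity
  set F : ℝ → ℝ := fun y => kappa0 p ^ 2 * (1 - d ^ 2) ^ a *
    ((1 + ν + d * y) ^ (-(2 * a)) * (1 - y ^ 2) ^ a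
        + a ^ 2 * (d ^ 2 * (1 - y ^ 2) * (1 + ν + d * y) ^ (-(2 * a + 2)) * (1 - y ^ 2) ^ a)
        + a ^ 2 * ν ^ 2 * ((1 + ν + d * y) ^ (-(2 * a + 2)) * (1 - y ^ 2) ^ a)) with hF
  have hFc : ContinuousOn F (Set.Icc (-1 : ℝ) 1) := by
    have hq := (cont_q ha).continuousOn (s := Set.Icc (-1 : ℝ) 1)
    exact ((((cont_w h (-(2 * a))).mul hq).add
      ((((by fun_prop : ContinuousOn (fun y : ℝ => d ^ 2 * (1 - y ^ 2)) _).mul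
        (cont_w h (-(2 * a + 2)))).mul hq).const_mul (a ^ 2))).add
      (((cont_w h (-(2 * a + 2))).mul hq).const_mul (a ^ 2 * ν ^ 2))).const_mul _
  have hF0 : ∀ y ∈ Set.Ioo (-1 : ℝ) 1, 0 ≤ F y := by
    intro y hy
    have hw := w_pos h (Set.Ioo_subset_Icc_self hy)
    have hq := one_sub_sq_nonneg (Set.Ioo_subset_Icc_self hy)
    simp only [hF]
    positivity
  have hFi : IntegrableOn F (Set.Ioo (-1 : ℝ) 1) :=
    (hFc.integrableOn_Icc).mono_set Set.Ioo_subset_Icc_self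
  have hlint : (∫⁻ y in Set.Ioo (-1 : ℝ) 1,
          ENNReal.ofReal ((kappa1star p d ν y ^ 2
            + (deriv (kappa1star p d ν) y) ^ 2 * (1 - y ^ 2)
            + kappa2star p d ν y ^ 2) * rho p y)) = ENNReal.ofReal (∫ y in (-1 : ℝ)..1, F y) := by
    rw [intervalIntegral.integral_of_le (by norm_num), integral_Ioc_eq_integral_Ioo,
      ofReal_integral_eq_lintegral_ofReal hFi
        ((ae_restrict_iff' measurableSet_Ioo).2 (Filter.Eventually.of_forall hF0))]
    refine setLIntegral_congr_fun measurableSet_Ioo fun y hy => ?_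
    simp only [hF]
    rw [integrand_eq hp hadef h hd hy]
  have hI0 : 0 ≤ ∫ y in (-1 : ℝ)..1, F y := by
    rw [intervalIntegral.integral_of_le (by norm_num), integral_Ioc_eq_integral_Ioo]
    exact setIntegral_nonneg measurableSet_Ioo hF0
  have hI := total_bound ha hd h
  rw [hlint, ENNReal.ofReal_rpow_of_nonneg hI0 (by norm_num)]
  apply ENNReal.ofReal_le_ofReal
  rw [← Real.sqrt_eq_rpow]
  have hlam_eq : lam p d ν = ((1 - d ^ 2) * ((1 + ν) ^ 2 - d ^ 2)⁻¹) ^ (1 / (p - 1)) := by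
    rw [lam, Real.mul_rpow hd2.le (by positivity), Real.inv_rpow hM.le]
    rfl
  have hR : 0 < (1 - d ^ 2) * ((1 + ν) ^ 2 - d ^ 2)⁻¹ := by positivity
  have l1 : lam p d ν ^ 2 = (1 - d ^ 2) ^ a * ((1 + ν) ^ 2 - d ^ 2) ^ (-a) := by
    rw [hlam_eq, ← Real.rpow_natCast, ← Real.rpow_mul hR.le, Real.rpow_neg hM.le,
      ← Real.inv_rpow hM.le, ← Real.mul_rpow hd2.le (by positivity), hadef]
    congr 1
    push_cast
    ring
  have l2 : (|ν| / Real.sqrt (1 - d ^ 2) * lam p d ν ^ ((p + 1) / 2)) ^ 2 =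
      (1 - d ^ 2) ^ a *
        (ν ^ 2 * ((1 + ν) ^ 2 - d ^ 2) ^ (-a) * ((1 + ν) ^ 2 - d ^ 2)⁻¹) := by
    -- `λ^(p-1)` is `(1 - d²) / M`, so `λ^(p+1)` is `λ²` times that quotient.
    have : (lam p d ν ^ ((p + 1) / 2)) ^ 2 = lam p d ν ^ 2 *
        ((1 - d ^ 2) * ((1 + ν) ^ 2 - d ^ 2)⁻¹) := by
      rw [hlam_eq]
      generalize (1 - d ^ 2) * ((1 + ν) ^ 2 - d ^ 2)⁻¹ = R at hR
      have hexp : 1 / (p - 1) * ((p + 1) / 2) * ((2 : ℕ) : ℝ) =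
          1 / (p - 1) * ((2 : ℕ) : ℝ) + 1 := by
        push_cast
        field_simp
        ring
      rw [← Real.rpow_natCast, ← Real.rpow_natCast, ← Real.rpow_mul hR.le,
        ← Real.rpow_mul hR.le, ← Real.rpow_mul hR.le, hexp, Real.rpow_add hR, Real.rpow_one]
    rw [mul_pow, this, l1, div_pow, sq_abs, Real.sq_sqrt hd2.le]
    field_simp
  set Y := |ν| / Real.sqrt (1 - d ^ 2) * lam p d ν ^ ((p + 1) / 2) with hY
  have hY0 : 0 ≤ Y := by positivity
  obtain ⟨χ, hχ⟩ : ∃ χ : ℝ, χ = if ν < 0 then 1 else 0 := ⟨_, rfl⟩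
  have hχ0 : 0 ≤ χ := by rw [hχ]; split_ifs <;> norm_num
  have hχ2 : χ ^ 2 = χ := by rw [hχ]; split_ifs <;> norm_num
  rw [← hχ] at hI ⊢
  apply Real.sqrt_le_iff.2
  have e : kappa0 p * Real.sqrt B * lam p d ν + kappa0 p * Real.sqrt B * χ *
      (|ν| / Real.sqrt (1 - d ^ 2)) * lam p d ν ^ ((p + 1) / 2)
      = kappa0 p * Real.sqrt B * (lam p d ν + χ * Y) := by rw [hY]; ring
  rw [e]
  refine ⟨by positivity, ?_⟩
  rw [hF, intervalIntegral.integral_const_mul]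
  calc _ ≤ kappa0 p ^ 2 * (1 - d ^ 2) ^ a * _ := mul_le_mul_of_nonneg_left hI (by positivity)
    _ = kappa0 p ^ 2 * B * (lam p d ν ^ 2 + χ ^ 2 * Y ^ 2) := by rw [l1, l2, hχ2]; ring
    _ ≤ kappa0 p ^ 2 * B * (lam p d ν + χ * Y) ^ 2 := by
        gcongr
        nlinarith [mul_nonneg hlam (mul_nonneg hχ0 hY0)]
    _ = _ := by rw [mul_pow, mul_pow, Real.sq_sqrt hBpos.le]
end

section
/- (κ*(d, μeˢ) solves the similarity-variables wave equation) Fix a real p > 1, d ∈ (−1,1) and μ ∈ ℝ, and define w(y,s) = κ₀ (1−d²)^{1/(p−1)} / (1+dy+μeˢ)^{2/(p−1)} on the open set of (y,s) ∈ (−1,1) × ℝ where 1+dy+μeˢ > 0. Then w > 0, ∂_s w(y,s) = κ₂*(d, μeˢ, y), and w satisfies ∂²_s w = (1/ρ) ∂_y ( ρ (1−y²) ∂_y w ) − (2(p+1)/(p−1)²) w + |w|^{p−1} w − ((p+3)/(p−1)) ∂_s w − 2y ∂²_{y,s} w on that set. -/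
/-- `w(y,s) = κ₀ (1−d²)^{1/(p−1)} / (1+dy+μeˢ)^{2/(p−1)}`, i.e. `κ₁*(d, μeˢ, y)`. -/
noncomputable def wfun (p d μ y s : ℝ) : ℝ :=
  kappa0 p * (1 - d ^ 2) ^ ((1 : ℝ) / (p - 1)) / (1 + d * y + μ * Real.exp s) ^ ((2 : ℝ) / (p - 1))

/-- The amplitude `κ₀ (1-d²)^{1/(p-1)}` of `w`. -/
noncomputable def amp (p d : ℝ) : ℝ := kappa0 p * (1 - d ^ 2) ^ ((1 : ℝ) / (p - 1))

/-- The base `A = 1 + dy + μeˢ` of the power in `w`. -/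
noncomputable def base (d μ y s : ℝ) : ℝ := 1 + d * y + μ * Real.exp s

lemma amp_pos {p d : ℝ} (hp : 1 < p) (hd : d ∈ Set.Ioo (-1 : ℝ) 1) : 0 < amp p d := by
  have h1 : 0 < p - 1 := by linarith
  have h2 : 0 < 1 - d ^ 2 := by nlinarith [hd.1, hd.2]
  unfold amp kappa0
  positivity

/-- The normalisation of `κ₀`: it is what balances the nonlinear term against the linear ones. -/
lemma amp_rpow {p d : ℝ} (hp : 1 < p) (hd : d ∈ Set.Ioo (-1 : ℝ) 1) :
    amp p d ^ (p - 1) = 2 * (p + 1) / (p - 1) ^ 2 * (1 - d ^ 2) := by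
  have h1 : 0 < p - 1 := by linarith
  have h2 : 0 < 1 - d ^ 2 := by nlinarith [hd.1, hd.2]
  have h3 : 0 ≤ 2 * (p + 1) / (p - 1) ^ 2 := by positivity
  unfold amp kappa0
  rw [Real.mul_rpow (by positivity) (by positivity), ← Real.rpow_mul h3, ← Real.rpow_mul h2.le,
    one_div_mul_cancel h1.ne', Real.rpow_one, Real.rpow_one]

lemma wfun_eq {p d μ y s : ℝ} (h : 0 < base d μ y s) :
    wfun p d μ y s = amp p d * base d μ y s ^ (-(2 / (p - 1))) := by
  rw [Real.rpow_neg h.le, ← div_eq_mul_inv]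
  rfl

lemma hasDerivAt_base_s (d μ y s : ℝ) :
    HasDerivAt (fun s' => base d μ y s') (μ * Real.exp s) s :=
  ((Real.hasDerivAt_exp s).const_mul μ).const_add (1 + d * y)

lemma hasDerivAt_base_y (d μ y s : ℝ) : HasDerivAt (fun y' => base d μ y' s) d y := by
  have h := (((hasDerivAt_id y).const_mul d).const_add 1).add_const (μ * Real.exp s)
  rw [mul_one] at h
  exact h

lemma eventually_base_s {d μ y s : ℝ} (h : 0 < base d μ y s) :
    ∀ᶠ s' in nhds s, 0 < base d μ y s' :=
  (hasDerivAt_base_s d μ y s).continuousAt.eventually (lt_mem_nhds h)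

lemma eventually_base_y {d μ y s : ℝ} (h : 0 < base d μ y s) :
    ∀ᶠ y' in nhds y, 0 < base d μ y' s :=
  (hasDerivAt_base_y d μ y s).continuousAt.eventually (lt_mem_nhds h)

lemma deriv_wfun_s {p d μ y s : ℝ} (h : 0 < base d μ y s) :
    deriv (fun s' => wfun p d μ y s') s = amp p d *
      (μ * Real.exp s * -(2 / (p - 1)) * base d μ y s ^ (-(2 / (p - 1)) - 1)) := by
  have h1 := ((hasDerivAt_base_s d μ y s).rpow_const (p := -(2 / (p - 1)))
    (Or.inl h.ne')).const_mul (amp p d)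
  refine (h1.congr_of_eventuallyEq ?_).deriv
  filter_upwards [eventually_base_s h] with s' hs' using wfun_eq hs'

lemma deriv_wfun_y {p d μ y s : ℝ} (h : 0 < base d μ y s) :
    deriv (fun y' => wfun p d μ y' s) y = amp p d *
      (d * -(2 / (p - 1)) * base d μ y s ^ (-(2 / (p - 1)) - 1)) := by
  have h1 := ((hasDerivAt_base_y d μ y s).rpow_const (p := -(2 / (p - 1)))
    (Or.inl h.ne')).const_mul (amp p d)
  refine (h1.congr_of_eventuallyEq ?_).deriv
  filter_upwards [eventually_base_y h] with y' hy' using wfun_eq hy'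

lemma deriv_wfun_ss {p d μ y s : ℝ} (h : 0 < base d μ y s) :
    deriv (fun s' => deriv (wfun p d μ y) s') s = amp p d *
      (μ * Real.exp s * -(2 / (p - 1)) * base d μ y s ^ (-(2 / (p - 1)) - 1) +
        μ * Real.exp s * -(2 / (p - 1)) * (μ * Real.exp s * (-(2 / (p - 1)) - 1) *
          base d μ y s ^ (-(2 / (p - 1)) - 1 - 1))) := by
  have h1 := ((((Real.hasDerivAt_exp s).const_mul μ).mul_const (-(2 / (p - 1)))).mul
    ((hasDerivAt_base_s d μ y s).rpow_const (p := -(2 / (p - 1)) - 1)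
      (Or.inl h.ne'))).const_mul (amp p d)
  refine (h1.congr_of_eventuallyEq ?_).deriv
  filter_upwards [eventually_base_s h] with s' hs' using deriv_wfun_s hs'

lemma deriv_wfun_sy {p d μ y s : ℝ} (h : 0 < base d μ y s) :
    deriv (fun y' => deriv (fun s' => wfun p d μ y' s') s) y = amp p d *
      (μ * Real.exp s * -(2 / (p - 1)) * (d * (-(2 / (p - 1)) - 1) *
          base d μ y s ^ (-(2 / (p - 1)) - 1 - 1))) := by
  have h1 := (((hasDerivAt_base_y d μ y s).rpow_const (p := -(2 / (p - 1)) - 1)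
      (Or.inl h.ne')).const_mul (μ * Real.exp s * -(2 / (p - 1)))).const_mul (amp p d)
  refine (h1.congr_of_eventuallyEq ?_).deriv
  filter_upwards [eventually_base_y h] with y' hy' using deriv_wfun_s hy'

/-- The weighted second-order operator, using `ρ' (1-y²) = -2 a y ρ` with `a = 2/(p-1)`. -/
lemma weighted_deriv {p d μ y s : ℝ} (hy : y ∈ Set.Ioo (-1 : ℝ) 1) (h : 0 < base d μ y s) :
    (1 / rho p y) * deriv (fun y' => rho p y' * (1 - y' ^ 2)
        * deriv (fun y'' => wfun p d μ y'' s) y') y =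
      (1 - y ^ 2) * (amp p d * (d * -(2 / (p - 1)) * (d * (-(2 / (p - 1)) - 1) *
          base d μ y s ^ (-(2 / (p - 1)) - 1 - 1))))
        - 2 * (2 / (p - 1) + 1) * y * (amp p d *
          (d * -(2 / (p - 1)) * base d μ y s ^ (-(2 / (p - 1)) - 1))) := by
  have h2 : 0 < 1 - y ^ 2 := by nlinarith [hy.1, hy.2]
  have hq : HasDerivAt (fun y' : ℝ => 1 - y' ^ 2) (-(2 * y)) y := by
    simpa using ((hasDerivAt_id y).pow 2).const_sub 1
  have hr : HasDerivAt (fun y' => rho p y') _ y :=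
    hq.rpow_const (p := 2 / (p - 1)) (Or.inl h2.ne')
  have h1 := (hr.mul hq).mul
    ((((hasDerivAt_base_y d μ y s).rpow_const (p := -(2 / (p - 1)) - 1)
      (Or.inl h.ne')).const_mul (d * -(2 / (p - 1)))).const_mul (amp p d))
  have h3 := (h1.congr_of_eventuallyEq (f₁ := fun y' => rho p y' * (1 - y' ^ 2)
      * deriv (fun y'' => wfun p d μ y'' s) y') (by
    filter_upwards [eventually_base_y h] with y' hy'
    simp only [Pi.mul_apply]
    rw [deriv_wfun_y hy'])).deriv
  have hrpos : 0 < rho p y := Real.rpow_pos_of_pos h2 _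
  have hr' : (1 - y ^ 2) ^ (2 / (p - 1) - 1) = rho p y / (1 - y ^ 2) :=
    Real.rpow_sub_one h2.ne' _
  rw [h3]
  simp only [Pi.mul_apply, hr']
  generalize base d μ y s ^ (-(2 / (p - 1)) - 1 - 1) = B2
  generalize base d μ y s ^ (-(2 / (p - 1)) - 1) = B1
  generalize 2 / (p - 1) = a
  field_simp
  ring

theorem stmt9 (p d μ : ℝ) (hp : 1 < p) (hd : d ∈ Set.Ioo (-1 : ℝ) 1) :
    ∀ y ∈ Set.Ioo (-1 : ℝ) 1, ∀ s : ℝ, 0 < 1 + d * y + μ * Real.exp s →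
      0 < wfun p d μ y s ∧
      deriv (wfun p d μ y) s = kappa2star p d (μ * Real.exp s) y ∧
      deriv (fun s' => deriv (wfun p d μ y) s') s =
        (1 / rho p y)
            * deriv (fun y' => rho p y' * (1 - y' ^ 2)
                * deriv (fun y'' => wfun p d μ y'' s) y') y
          - (2 * (p + 1) / (p - 1) ^ 2) * wfun p d μ y s
          + |wfun p d μ y s| ^ (p - 1) * wfun p d μ y s
          - ((p + 3) / (p - 1)) * deriv (wfun p d μ y) s
          - 2 * y * deriv (fun y' => deriv (fun s' => wfun p d μ y' s') s) y := by
  intro y hy s hA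
  have hp1 : 0 < p - 1 := by linarith
  have h : 0 < base d μ y s := hA
  have hC := amp_pos hp hd
  have hw := wfun_eq (p := p) h
  have hwpos : 0 < wfun p d μ y s := by rw [hw]; positivity
  have hs : deriv (wfun p d μ y) s = _ := deriv_wfun_s h
  refine ⟨hwpos, ?_, ?_⟩
  · rw [hs]
    have he : -(2 / (p - 1)) - 1 = -((p + 1) / (p - 1)) := by field_simp; ring
    rw [he, Real.rpow_neg h.le]
    unfold kappa2star amp base
    ring
  · have hnl : |wfun p d μ y s| ^ (p - 1)
        = 2 * (p + 1) / (p - 1) ^ 2 * (1 - d ^ 2) / base d μ y s ^ 2 := by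
      rw [abs_of_pos hwpos, hw, Real.mul_rpow hC.le (by positivity), amp_rpow hp hd,
        ← Real.rpow_mul h.le]
      have he : -(2 / (p - 1)) * (p - 1) = -(2 : ℕ) := by push_cast; field_simp
      rw [he, Real.rpow_neg h.le, Real.rpow_natCast, ← div_eq_mul_inv]
    rw [deriv_wfun_ss h, weighted_deriv hy h, deriv_wfun_sy h, hnl, hs, hw,
      Real.rpow_sub_one h.ne' (-(2 / (p - 1)) - 1), Real.rpow_sub_one h.ne' (-(2 / (p - 1)))]
    -- With `a = 2/(p-1)`, all coefficients are polynomials in `a`.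
    have e1 : 2 * (p + 1) / (p - 1) ^ 2 = 2 / (p - 1) * (2 / (p - 1) + 1) := by
      field_simp; ring
    have e2 : (p + 3) / (p - 1) = 1 + 2 * (2 / (p - 1)) := by field_simp; ring
    rw [e1, e2]
    generalize base d μ y s ^ (-(2 / (p - 1))) = B
    generalize 2 / (p - 1) = a
    have hν : μ * Real.exp s = base d μ y s - 1 - d * y := by unfold base; ring
    rw [hν]
    generalize base d μ y s = A at h ⊢
    field_simp
    ring
end

section
/- (Heteroclinic behavior of the generalized solitons) Fix a real p > 1, d ∈ (−1,1) and μ > 0. Then ‖κ*(d, μeˢ, ·) − (κ(d,·), 0)‖_H → 0 as s → −∞, and ‖κ*(d, μeˢ, ·)‖_H → 0 as s → +∞. -/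
/-!
Write `ν = μ eˢ`, `a = 2/(p-1)`, `A = κ₀ (1-d²)^{1/(p-1)}` and `m = 1 - |d| > 0`, so that
`1 + dy ≥ m` on `(-1,1)`. Then `κ₁* = A (1+dy+ν)^{-a}`, `∂_y κ₁* = -A a d (1+dy+ν)^{-a-1}` and
`|κ₂*| = |A| a ν (1+dy+ν)^{-a-1} ≤ |A| a (1+dy+ν)^{-a}`. All three are bounded uniformly in `y` and
`ν ≥ 0`, by powers of `m`, and converge pointwise as `ν → 0⁺` (to `κ(d,·)`, its derivative, and `0`)
and as `ν → ∞` (to `0`). Since `(-1,1)` has finite measure and `0 ≤ ρ ≤ 1`, dominated convergence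
(`tendsto_energyNorm`) gives both limits.
-/

open MeasureTheory Filter

/-- Dominated convergence for the weighted energy norm: uniformly bounded families converging
pointwise to zero have norms tending to zero. The second family plays the role of the
`y`-derivative. -/
lemma tendsto_energyNorm {p : ℝ} (hp : 1 < p) {l : Filter ℝ} [l.IsCountablyGenerated]
    {X Y Z : ℝ → ℝ → ℝ} (hXm : ∀ s, Measurable (X s)) (hYm : ∀ s, Measurable (Y s))
    (hZm : ∀ s, Measurable (Z s)) {M N K : ℝ}
    (hX : ∀ s, ∀ y ∈ Set.Ioo (-1 : ℝ) 1, |X s y| ≤ M)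
    (hY : ∀ s, ∀ y ∈ Set.Ioo (-1 : ℝ) 1, |Y s y| ≤ N)
    (hZ : ∀ s, ∀ y ∈ Set.Ioo (-1 : ℝ) 1, |Z s y| ≤ K)
    (hX0 : ∀ y ∈ Set.Ioo (-1 : ℝ) 1, Tendsto (fun s => X s y) l (nhds 0))
    (hY0 : ∀ y ∈ Set.Ioo (-1 : ℝ) 1, Tendsto (fun s => Y s y) l (nhds 0))
    (hZ0 : ∀ y ∈ Set.Ioo (-1 : ℝ) 1, Tendsto (fun s => Z s y) l (nhds 0)) :
    Tendsto (fun s : ℝ => (∫⁻ y in Set.Ioo (-1 : ℝ) 1,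
      ENNReal.ofReal ((X s y ^ 2 + Y s y ^ 2 * (1 - y ^ 2) + Z s y ^ 2) * rho p y))
        ^ ((1 : ℝ) / 2)) l (nhds 0) := by
  have key : Tendsto (fun s : ℝ => ∫⁻ y in Set.Ioo (-1 : ℝ) 1,
      ENNReal.ofReal ((X s y ^ 2 + Y s y ^ 2 * (1 - y ^ 2) + Z s y ^ 2) * rho p y))
      l (nhds (∫⁻ _ in Set.Ioo (-1 : ℝ) 1, 0)) := by
    have hrm : Measurable (rho p) := by unfold rho; fun_prop
    refine tendsto_lintegral_filter_of_dominated_convergence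
      (fun _ => ENNReal.ofReal (M ^ 2 + N ^ 2 + K ^ 2)) ?_ ?_ ?_ ?_
    · refine Eventually.of_forall fun s => ?_
      have := hXm s
      have := hYm s
      have := hZm s
      fun_prop
    · refine Eventually.of_forall fun s => ?_
      refine (ae_restrict_iff' measurableSet_Ioo).2 (Eventually.of_forall fun y hy => ?_)
      apply ENNReal.ofReal_le_ofReal
      have h1 : 0 ≤ 1 - y ^ 2 := by nlinarith [hy.1, hy.2]
      have h2 : 1 - y ^ 2 ≤ 1 := by nlinarith
      have hr0 : 0 ≤ rho p y := Real.rpow_nonneg h1 _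
      have hr1 : rho p y ≤ 1 :=
        Real.rpow_le_one h1 h2 (div_nonneg zero_le_two (by linarith))
      have hx : X s y ^ 2 ≤ M ^ 2 := sq_le_sq.2 ((hX s y hy).trans (le_abs_self M))
      have hy' : Y s y ^ 2 ≤ N ^ 2 := sq_le_sq.2 ((hY s y hy).trans (le_abs_self N))
      have hz : Z s y ^ 2 ≤ K ^ 2 := sq_le_sq.2 ((hZ s y hy).trans (le_abs_self K))
      have hy2 : Y s y ^ 2 * (1 - y ^ 2) ≤ Y s y ^ 2 :=
        mul_le_of_le_one_right (sq_nonneg _) h2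
      have h0 : 0 ≤ X s y ^ 2 + Y s y ^ 2 * (1 - y ^ 2) + Z s y ^ 2 := by positivity
      exact (mul_le_of_le_one_right h0 hr1).trans (by linarith)
    · rw [lintegral_const]
      simp [ENNReal.mul_eq_top]
    · refine (ae_restrict_iff' measurableSet_Ioo).2 (Eventually.of_forall fun y hy => ?_)
      have h := (((((hX0 y hy).pow 2).add (((hY0 y hy).pow 2).mul_const (1 - y ^ 2))).add
        ((hZ0 y hy).pow 2)).mul_const (rho p y))
      simpa using ENNReal.tendsto_ofReal h
  have h := ENNReal.continuous_rpow_const (y := (1 : ℝ) / 2) |>.tendsto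
    (∫⁻ _ in Set.Ioo (-1 : ℝ) 1, (0 : ENNReal)) |>.comp key
  simpa [Function.comp_def] using h

lemma solKappa_eq (p d : ℝ) : solKappa p d = kappa1star p d 0 := by
  funext y
  simp [solKappa, kappa1star]

lemma add_one_exponent {p : ℝ} (hp : 1 < p) : (p + 1) / (p - 1) = 2 / (p - 1) + 1 := by
  have : p - 1 ≠ 0 := by linarith
  field_simp
  ring

lemma one_sub_abs_le {d y : ℝ} (hy : y ∈ Set.Ioo (-1 : ℝ) 1) : 1 - |d| ≤ 1 + d * y := by
  have h : |d * y| ≤ |d| := by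
    rw [abs_mul]
    exact mul_le_of_le_one_right (abs_nonneg _) (abs_le.2 ⟨hy.1.le, hy.2.le⟩)
  linarith [neg_abs_le (d * y)]

/-- The `y`-derivative of `κ₁*`, with the same power of `1 + dy + ν` as in `κ₂*`. -/
lemma hasDerivAt_kappa1star {p : ℝ} (hp : 1 < p) {d ν y : ℝ} (h : 0 < 1 + d * y + ν) :
    HasDerivAt (kappa1star p d ν)
      (-(kappa0 p * (1 - d ^ 2) ^ ((1 : ℝ) / (p - 1)) * (2 / (p - 1)) * d)
        / (1 + d * y + ν) ^ ((p + 1) / (p - 1))) y := by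
  have h1 : HasDerivAt (fun y : ℝ => 1 + d * y + ν) d y := by
    simpa using (((hasDerivAt_id y).const_mul d).const_add 1).add_const ν
  have h2 := h1.rpow_const (p := (2 : ℝ) / (p - 1)) (Or.inl h.ne')
  have hne : (1 + d * y + ν) ^ ((2 : ℝ) / (p - 1)) ≠ 0 := (Real.rpow_pos_of_pos h _).ne'
  have h3 := (hasDerivAt_const y (kappa0 p * (1 - d ^ 2) ^ ((1 : ℝ) / (p - 1)))).div h2 hne
  refine h3.congr_deriv ?_
  rw [add_one_exponent hp, Real.rpow_add_one h.ne', Real.rpow_sub_one h.ne']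
  field_simp
  ring

/-- Uniform bound for the quotients `C / (1 + dy + ν)^b` in terms of the infimum `1 - |d|` of
`1 + dy`. -/
lemma abs_div_rpow_le {d ν y b : ℝ} (C : ℝ) (hd : |d| < 1) (hν : 0 ≤ ν) (hb : 0 ≤ b)
    (hy : y ∈ Set.Ioo (-1 : ℝ) 1) :
    |C / (1 + d * y + ν) ^ b| ≤ |C| / (1 - |d|) ^ b := by
  have hm : 0 < 1 - |d| := by linarith
  have hle : 1 - |d| ≤ 1 + d * y + ν := by linarith [one_sub_abs_le (d := d) hy]
  rw [abs_div, abs_of_pos (Real.rpow_pos_of_pos (hm.trans_le hle) b)]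
  exact div_le_div_of_nonneg_left (abs_nonneg C) (Real.rpow_pos_of_pos hm b)
    (Real.rpow_le_rpow hm.le hle hb)

/-- `κ₂*` is controlled uniformly in `ν` because the factor `ν` is absorbed by one power of
`1 + dy + ν`. -/
lemma abs_kappa2star_le {p : ℝ} (hp : 1 < p) {d ν y : ℝ} (h : 0 < 1 + d * y) (hν : 0 ≤ ν) :
    |kappa2star p d ν y| ≤
      |2 / (p - 1) * kappa0 p * (1 - d ^ 2) ^ ((1 : ℝ) / (p - 1))
        / (1 + d * y + ν) ^ ((2 : ℝ) / (p - 1))| := by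
  have hu : 0 < 1 + d * y + ν := by linarith
  have hP : 0 < (1 + d * y + ν) ^ ((2 : ℝ) / (p - 1)) := Real.rpow_pos_of_pos hu _
  have hE : kappa2star p d ν y =
      2 / (p - 1) * kappa0 p * (1 - d ^ 2) ^ ((1 : ℝ) / (p - 1))
        / (1 + d * y + ν) ^ ((2 : ℝ) / (p - 1)) * (-(ν / (1 + d * y + ν))) := by
    rw [kappa2star, add_one_exponent hp, Real.rpow_add_one hu.ne']
    have : p - 1 ≠ 0 := by linarith
    field_simp
  rw [hE, abs_mul]
  refine mul_le_of_le_one_right (abs_nonneg _) ?_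
  rw [abs_neg, abs_of_nonneg (div_nonneg hν hu.le)]
  exact (div_le_one hu).2 (by linarith)

lemma measurable_kappa1star (p d ν : ℝ) : Measurable (kappa1star p d ν) := by
  unfold kappa1star; fun_prop

lemma measurable_kappa2star (p d ν : ℝ) : Measurable (kappa2star p d ν) := by
  unfold kappa2star; fun_prop

lemma tendsto_div_rpow_of_tendsto_zero {l : Filter ℝ} {ν : ℝ → ℝ} {u : ℝ} (C b : ℝ) (hu : 0 < u)
    (hν : Tendsto ν l (nhds 0)) :
    Tendsto (fun s => C / (u + ν s) ^ b) l (nhds (C / u ^ b)) := by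
  have h : Tendsto (fun s => u + ν s) l (nhds u) := by simpa using hν.const_add u
  exact tendsto_const_nhds.div (h.rpow_const (Or.inl hu.ne')) (Real.rpow_pos_of_pos hu b).ne'

lemma tendsto_div_rpow_of_tendsto_atTop {l : Filter ℝ} {ν : ℝ → ℝ} (C u : ℝ) {b : ℝ} (hb : 0 < b)
    (hν : Tendsto ν l atTop) : Tendsto (fun s => C / (u + ν s) ^ b) l (nhds 0) :=
  ((tendsto_rpow_atTop hb).comp (tendsto_atTop_add_const_left l u hν)).const_div_atTop C

theorem stmt10 (p d μ : ℝ) (hp : 1 < p) (hd : d ∈ Set.Ioo (-1 : ℝ) 1) (hμ : 0 < μ) :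
    Tendsto (fun s : ℝ =>
        (∫⁻ y in Set.Ioo (-1 : ℝ) 1,
            ENNReal.ofReal (((kappa1star p d (μ * Real.exp s) y - solKappa p d y) ^ 2
              + (deriv (fun y' => kappa1star p d (μ * Real.exp s) y' - solKappa p d y') y) ^ 2
                  * (1 - y ^ 2)
              + (kappa2star p d (μ * Real.exp s) y - 0) ^ 2) * rho p y)) ^ ((1 : ℝ) / 2))
      atBot (nhds 0) ∧
    Tendsto (fun s : ℝ =>
        (∫⁻ y in Set.Ioo (-1 : ℝ) 1,
            ENNReal.ofReal ((kappa1star p d (μ * Real.exp s) y ^ 2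
              + (deriv (kappa1star p d (μ * Real.exp s)) y) ^ 2 * (1 - y ^ 2)
              + kappa2star p d (μ * Real.exp s) y ^ 2) * rho p y)) ^ ((1 : ℝ) / 2))
      atTop (nhds 0) := by
  have hd' : |d| < 1 := abs_lt.2 hd
  have ha : 0 < (2 : ℝ) / (p - 1) := div_pos two_pos (by linarith)
  have hb : 0 < (p + 1) / (p - 1) := by rw [add_one_exponent hp]; linarith
  have hu : ∀ y ∈ Set.Ioo (-1 : ℝ) 1, 0 < 1 + d * y := fun y hy => by
    linarith [one_sub_abs_le (d := d) hy]
  have hν : ∀ s, 0 ≤ μ * Real.exp s := fun s => by positivity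
  have hderiv : ∀ ν, 0 ≤ ν → ∀ y ∈ Set.Ioo (-1 : ℝ) 1, HasDerivAt (kappa1star p d ν)
      (-(kappa0 p * (1 - d ^ 2) ^ ((1 : ℝ) / (p - 1)) * (2 / (p - 1)) * d)
        / (1 + d * y + ν) ^ ((p + 1) / (p - 1))) y := fun ν h y hy =>
    hasDerivAt_kappa1star hp (by linarith [hu y hy])
  have hK : ∀ s, ∀ y ∈ Set.Ioo (-1 : ℝ) 1, |kappa2star p d (μ * Real.exp s) y| ≤ _ :=
    fun s y hy => (abs_kappa2star_le hp (hu y hy) (hν s)).trans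
      (abs_div_rpow_le _ hd' (hν s) ha.le hy)
  constructor
  · have hlim : Tendsto (fun s => μ * Real.exp s) atBot (nhds 0) := by
      simpa using Real.tendsto_exp_atBot.const_mul μ
    -- The derivative of the difference, with `κ(d,·)` regarded as `κ₁*` at `ν = 0`.
    have hdiff : ∀ s, ∀ y ∈ Set.Ioo (-1 : ℝ) 1, _ = _ := fun s y hy =>
      ((hderiv _ (hν s) y hy).fun_sub (hderiv 0 le_rfl y hy)).deriv
    simp only [solKappa_eq, sub_zero]
    refine tendsto_energyNorm hp
      (fun s => (measurable_kappa1star _ _ _).sub (measurable_kappa1star _ _ _))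
      (fun s => measurable_deriv _) (fun s => measurable_kappa2star _ _ _)
      (fun s y hy => (abs_sub _ _).trans (add_le_add (abs_div_rpow_le _ hd' (hν s) ha.le hy)
        (abs_div_rpow_le _ hd' le_rfl ha.le hy)))
      (fun s y hy => (congrArg abs (hdiff s y hy)).trans_le <|
        (abs_sub _ _).trans (add_le_add (abs_div_rpow_le _ hd' (hν s) hb.le hy)
          (abs_div_rpow_le _ hd' le_rfl hb.le hy)))
      hK (fun y hy => ?_) (fun y hy => ?_) (fun y hy => ?_)
    · have h := tendsto_div_rpow_of_tendsto_zero
        (kappa0 p * (1 - d ^ 2) ^ ((1 : ℝ) / (p - 1))) (2 / (p - 1)) (hu y hy) hlim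
      have h' := h.sub_const
        (kappa0 p * (1 - d ^ 2) ^ ((1 : ℝ) / (p - 1)) / (1 + d * y) ^ ((2 : ℝ) / (p - 1)))
      rw [sub_self] at h'
      simpa only [kappa1star, add_zero] using h'
    · simp only [hdiff _ y hy]
      have h := tendsto_div_rpow_of_tendsto_zero
        (-(kappa0 p * (1 - d ^ 2) ^ ((1 : ℝ) / (p - 1)) * (2 / (p - 1)) * d))
        ((p + 1) / (p - 1)) (hu y hy) hlim
      have h' := h.sub_const (-(kappa0 p * (1 - d ^ 2) ^ ((1 : ℝ) / (p - 1)) * (2 / (p - 1)) * d)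
        / (1 + d * y) ^ ((p + 1) / (p - 1)))
      rw [sub_self] at h'
      simpa only [add_zero] using h'
    · have h := (hlim.mul (tendsto_div_rpow_of_tendsto_zero
        (-(2 * kappa0 p / (p - 1)) * (1 - d ^ 2) ^ ((1 : ℝ) / (p - 1)))
        ((p + 1) / (p - 1)) (hu y hy) hlim))
      rw [zero_mul] at h
      refine h.congr fun s => ?_
      rw [kappa2star]
      ring
  · have hlim : Tendsto (fun s => μ * Real.exp s) atTop atTop :=
      Real.tendsto_exp_atTop.const_mul_atTop hμ
    refine tendsto_energyNorm hp (fun s => measurable_kappa1star _ _ _)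
      (fun s => measurable_deriv _) (fun s => measurable_kappa2star _ _ _)
      (fun s y hy => abs_div_rpow_le _ hd' (hν s) ha.le hy)
      (fun s y hy => (congrArg abs (hderiv _ (hν s) y hy).deriv).trans_le
        (abs_div_rpow_le _ hd' (hν s) hb.le hy)) hK
      (fun y hy => tendsto_div_rpow_of_tendsto_atTop _ _ ha hlim)
      (fun y hy => ?_) (fun y hy => ?_)
    · simp only [fun s => (hderiv _ (hν s) y hy).deriv]
      exact tendsto_div_rpow_of_tendsto_atTop _ _ hb hlim
    · refine squeeze_zero_norm
        (fun s => (abs_kappa2star_le hp (hu y hy) (hν s))) ?_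
      simpa using (tendsto_div_rpow_of_tendsto_atTop _ (1 + d * y) ha hlim).abs
end
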